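/- arXiv:2002.01297 — 2 statements merged into one kernel-verified Lean document; each statement's English description precedes it below -/
import Mathlib

section
/- For every real γ > 0 and every graph H with at least one edge and chromatic number r, there exists n₀ ∈ ℕ such that for all integers n > n₀, IR(H, K_{1,n}) ≤ (r−1)²·n + γ·n. -/
open SimpleGraph

def ArrowsInd {V α β : Type*} (F : SimpleGraph V) (H : SimpleGraph α) (G : SimpleGraph β) : Prop :=
  ∀ c : Sym2 V → Bool,
    (∃ f : H ↪g F, ∀ u v, H.Adj u v → c s(f u, f v) = true) ∨
    (∃ g : G ↪g F, ∀ u v, G.Adj u v → c s(g u, g v) = false)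

noncomputable def IR {α β : Type*} (H : SimpleGraph α) (G : SimpleGraph β) : ℕ :=
  sInf {N : ℕ | ∃ F : SimpleGraph (Fin N), ArrowsInd F H G}

def StarGraph (n : ℕ) : SimpleGraph (Fin 1 ⊕ Fin n) := completeBipartiteGraph (Fin 1) (Fin n)

open Finset BigOperators in
lemma ex_jensen {α : Type*} [Fintype α] [Nonempty α] (f : α → ℝ) (hf : ∀ a, 0 ≤ f a) (n : ℕ) :
    (𝔼 a, f a) ^ n ≤ 𝔼 a, f a ^ n := by
  have hc : (Fintype.card α : ℝ) ≠ 0 := by simp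
  have h := Real.pow_arith_mean_le_arith_mean_pow (Finset.univ : Finset α)
    (fun _ => 1 / (Fintype.card α : ℝ)) f (fun _ _ => by positivity)
    (by simp [hc]) (fun i _ => hf i) n
  rw [← Finset.mul_sum, ← Finset.mul_sum] at h
  rw [Fintype.expect_eq_sum_div_card, Fintype.expect_eq_sum_div_card]
  convert h using 1
  · ring
  · ring

open Finset BigOperators in
lemma ex_prod {α β : Type*} [Fintype α] [Fintype β] (f : α × β → ℝ) :
    𝔼 p, f p = 𝔼 a, 𝔼 b, f (a, b) := by
  rw [← Finset.univ_product_univ, Finset.expect_product]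

open Finset BigOperators in
lemma ex_cons {Y : Type*} [Fintype Y] (t : ℕ) (f : (Fin (t + 1) → Y) → ℝ) :
    𝔼 y, f y = 𝔼 y', 𝔼 a, f (Fin.cons a y') := by
  rw [Finset.expect_comm, ← ex_prod (fun p : Y × (Fin t → Y) => f (Fin.cons p.1 p.2))]
  exact (Fintype.expect_equiv (Fin.consEquiv (fun _ : Fin (t + 1) => Y)) _ _
    (fun p => rfl)).symm

open Finset BigOperators in
lemma ex_pi_pow {Y : Type*} [Fintype Y] (G : Y → ℝ) (k : ℕ) :
    𝔼 z : Fin k → Y, ∏ i, G (z i) = (𝔼 y, G y) ^ k := by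
  classical
  rw [Finset.expect_pow]
  simp

/-- Sequential counting of partite cliques. -/
lemma ex_clique {Y : Type*} [Fintype Y] [Nonempty Y] (θ η : ℝ) (hη : 0 ≤ η)
    (hθ : 0 ≤ θ) (t : ℕ) :
    ∀ (K : Fin t → Fin t → Y → Y → Prop),
    (∀ i j, i < j → ∀ y', Finset.expect Finset.univ
      (fun y => open Classical in if K i j y y' then (0 : ℝ) else 1) ≤ θ) →
    ((t : ℝ) - 1) * θ ≤ 1 - η →
    η ^ t ≤ Finset.expect Finset.univ (fun y : Fin t → Y => open Classical in
      if ∀ i j, i < j → K i j (y i) (y j) then (1 : ℝ) else 0) := by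
  classical
  induction t with
  | zero => intro K _ _; simp
  | succ t ih =>
    intro K hK ht
    push_cast at ht
    have ih' := ih (fun i j => K i.succ j.succ)
      (fun i j hij y' => hK i.succ j.succ (Fin.succ_lt_succ_iff.2 hij) y') (by linarith)
    rw [ex_cons, pow_succ]
    refine (mul_le_mul_of_nonneg_right ih' hη).trans ?_
    rw [Finset.expect_mul]
    refine Finset.expect_le_expect fun y' _ => ?_
    by_cases hy : ∀ i j, i < j → K i.succ j.succ (y' i) (y' j)
    · rw [if_pos hy, one_mul]
      have h1 : ∀ a : Y, 1 - ∑ j : Fin t, (if K 0 j.succ a (y' j) then (0 : ℝ) else 1) ≤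
          if ∀ i j, i < j → K i j ((Fin.cons a y' : Fin (t + 1) → Y) i)
            ((Fin.cons a y' : Fin (t + 1) → Y) j) then (1 : ℝ) else 0 := by
        intro a
        by_cases ha : ∀ j : Fin t, K 0 j.succ a (y' j)
        · rw [if_pos]
          · simp [ha]
          · intro i j hij
            obtain ⟨j, rfl⟩ := Fin.exists_succ_eq.2 (Fin.ne_zero_of_lt hij)
            revert hij
            refine Fin.cases ?_ (fun i => ?_) i
            · intro _; simpa using ha j
            · intro hij; simpa using hy i j (Fin.succ_lt_succ_iff.1 hij)
        · push Not at ha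
          obtain ⟨j, hj⟩ := ha
          have : (1 : ℝ) ≤ ∑ j : Fin t, (if K 0 j.succ a (y' j) then (0 : ℝ) else 1) := by
            calc (1 : ℝ) = (if K 0 j.succ a (y' j) then (0 : ℝ) else 1) := by simp [hj]
              _ ≤ _ := Finset.single_le_sum
                (f := fun j => (if K 0 (Fin.succ j) a (y' j) then (0 : ℝ) else 1))
                (fun i _ => by split_ifs <;> norm_num) (Finset.mem_univ j)
          have h2 : (0 : ℝ) ≤ if ∀ i j, i < j → K i j ((Fin.cons a y' : Fin (t + 1) → Y) i)
            ((Fin.cons a y' : Fin (t + 1) → Y) j) then (1 : ℝ) else 0 := by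
            split_ifs <;> norm_num
          linarith
      refine le_trans ?_ (Finset.expect_le_expect fun a _ => h1 a)
      rw [Finset.expect_sub_distrib, Fintype.expect_const, Finset.expect_sum_comm]
      have : ∑ j : Fin t, Finset.expect Finset.univ
          (fun a => if K 0 j.succ a (y' j) then (0 : ℝ) else 1) ≤ ∑ j : Fin t, θ :=
        Finset.sum_le_sum fun j _ => hK 0 j.succ (Fin.succ_pos j) (y' j)
      simp at this
      linarith
    · rw [if_neg hy, zero_mul]
      exact Finset.expect_nonneg fun a _ => by split_ifs <;> norm_num

/-- Blow-up counting (Erdős box theorem, via convexity). -/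
lemma ex_blowup {Y : Type*} [Fintype Y] [Nonempty Y] (k t : ℕ) :
    ∀ (w : (Fin t → Y) → ℝ), (∀ y, 0 ≤ w y) →
    (Finset.expect Finset.univ w) ^ (k ^ t) ≤
      Finset.expect Finset.univ (fun z : Fin t → (Fin k → Y) =>
        ∏ σ : Fin t → Fin k, w (fun j => z j (σ j))) := by
  induction t with
  | zero =>
    intro w _
    simp only [pow_zero, pow_one, Finset.univ_unique, Finset.prod_singleton,
      Finset.expect_singleton]
    exact le_of_eq (congrArg w (Subsingleton.elim _ _))
  | succ t ih =>
    intro w hw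
    rw [ex_cons t w, ex_cons]
    have key : ∀ z' : Fin t → (Fin k → Y),
        Finset.expect Finset.univ (fun a : Fin k → Y => ∏ σ : Fin (t + 1) → Fin k,
          w (fun j => (Fin.cons a z' : Fin (t + 1) → (Fin k → Y)) j (σ j))) =
        (Finset.expect Finset.univ (fun y : Y => ∏ σ : Fin t → Fin k,
          w (Fin.cons y (fun j => z' j (σ j))))) ^ k := by
      intro z'
      rw [← ex_pi_pow]
      refine Finset.expect_congr rfl fun a _ => ?_
      rw [← Fintype.prod_prod_type' (fun (i : Fin k) (σ : Fin t → Fin k) =>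
        w (Fin.cons (a i) (fun j => z' j (σ j))))]
      symm
      refine Fintype.prod_equiv (Fin.consEquiv (fun _ : Fin (t + 1) => Fin k)) _ _ ?_
      rintro ⟨i, σ⟩
      congr 1
      funext j
      refine Fin.cases ?_ (fun j => ?_) j <;> simp [Fin.consEquiv]
    simp_rw [key]
    refine le_trans ?_ (ex_jensen _ (fun z' => Finset.expect_nonneg fun y _ =>
      Finset.prod_nonneg fun σ _ => hw _) k)
    rw [pow_succ, pow_mul]
    refine pow_le_pow_left₀ (pow_nonneg (Finset.expect_nonneg fun _ _ =>
      Finset.expect_nonneg fun _ _ => hw _) _) ?_ k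
    rw [Finset.expect_comm]
    refine (ex_jensen _ (fun y => Finset.expect_nonneg fun _ _ => hw _) _).trans ?_
    rw [Finset.expect_comm]
    exact Finset.expect_le_expect fun y _ => ih (fun y' => w (Fin.cons y y')) (fun _ => hw _)

/-- Resampling one coordinate. -/
lemma ex_resample {ι Y : Type*} [Fintype ι] [DecidableEq ι] [Fintype Y] [Nonempty Y]
    (u : ι) (Ψ : (ι → Y) → ℝ) :
    Finset.expect Finset.univ Ψ = Finset.expect Finset.univ (fun y : ι → Y =>
      Finset.expect Finset.univ (fun a : Y => Ψ (Function.update y u a))) := by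
  rw [← ex_prod (fun p : (ι → Y) × Y => Ψ (Function.update p.1 u p.2))]
  have hinv : Function.Involutive
      (fun p : (ι → Y) × Y => (Function.update p.1 u p.2, p.1 u)) := by
    rintro ⟨y, a⟩
    simp
  have h1 : Finset.expect Finset.univ (fun p : (ι → Y) × Y => Ψ p.1) =
      Finset.expect Finset.univ Ψ := by
    rw [ex_prod]; simp
  rw [← h1]
  exact (Fintype.expect_equiv hinv.toPerm _ _ (fun p => rfl)).symm

/-- Replacing one quasirandom factor by its density. -/
lemma ex_swap {ι Y : Type*} [Fintype ι] [DecidableEq ι] [Fintype Y] [Nonempty Y]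
    (u v : ι) (huv : u ≠ v) (A B : (ι → Y) → ℝ) (K : Y → Y → ℝ) (δ κ : ℝ)
    (hA0 : ∀ y, 0 ≤ A y) (hA1 : ∀ y, A y ≤ 1) (hB0 : ∀ y, 0 ≤ B y) (hB1 : ∀ y, B y ≤ 1)
    (hA : ∀ y b, A (Function.update y v b) = A y)
    (hB : ∀ y a, B (Function.update y u a) = B y)
    (hK : ∀ f g : Y → ℝ, (∀ y, 0 ≤ f y) → (∀ y, f y ≤ 1) → (∀ y, 0 ≤ g y) → (∀ y, g y ≤ 1) →
      -κ ≤ Finset.expect Finset.univ (fun a => Finset.expect Finset.univ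
        (fun b => f a * g b * (K a b - δ)))) :
    δ * Finset.expect Finset.univ (fun y => A y * B y) - κ ≤
      Finset.expect Finset.univ (fun y => A y * B y * K (y u) (y v)) := by
  have h : -κ ≤ Finset.expect Finset.univ (fun y => A y * B y * (K (y u) (y v) - δ)) := by
    rw [ex_resample u]
    rw [ex_resample v]
    refine Finset.le_expect Finset.univ_nonempty fun y _ => ?_
    have h2 := hK (fun a => A (Function.update y u a)) (fun b => B (Function.update y v b))
      (fun _ => hA0 _) (fun _ => hA1 _) (fun _ => hB0 _) (fun _ => hB1 _)
    rw [Finset.expect_comm]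
    refine h2.trans (le_of_eq ?_)
    refine Finset.expect_congr rfl fun a _ => Finset.expect_congr rfl fun b _ => ?_
    have e1 : A (Function.update (Function.update y v b) u a) = A (Function.update y u a) := by
      rw [Function.update_comm huv.symm, hA]
    rw [e1, hB]
    simp [huv.symm]
  have e : ∀ y, A y * B y * (K (y u) (y v) - δ) =
    A y * B y * K (y u) (y v) - δ * (A y * B y) := fun y => by ring
  simp_rw [e] at h
  rw [Finset.expect_sub_distrib, ← Finset.mul_expect] at h
  linarith

lemma ex_swap_all {ι Y : Type*} [Fintype ι] [DecidableEq ι] [Fintype Y] [Nonempty Y] (k : ℕ)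
    (p : Fin k → ι) (hp : Function.Injective p) (K : Fin k → Fin k → Y → Y → ℝ) (δ κ : ℝ)
    (hδ0 : 0 ≤ δ) (hδ1 : δ ≤ 1) (hκ : 0 ≤ κ)
    (hK0 : ∀ u v a b, 0 ≤ K u v a b) (hK1 : ∀ u v a b, K u v a b ≤ 1)
    (T D : Finset (Fin k × Fin k)) (hT : ∀ e ∈ T, e.1 < e.2) (hTD : Disjoint D T)
    (hD : ∀ e ∈ D, e.1 < e.2)
    (hK : ∀ e ∈ D, ∀ f g : Y → ℝ, (∀ y, 0 ≤ f y) → (∀ y, f y ≤ 1) → (∀ y, 0 ≤ g y) →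
      (∀ y, g y ≤ 1) →
      -κ ≤ Finset.expect Finset.univ (fun a => Finset.expect Finset.univ
        (fun b => f a * g b * (K e.1 e.2 a b - δ)))) :
    δ ^ D.card * Finset.expect Finset.univ (fun y : ι → Y =>
      ∏ e ∈ T, K e.1 e.2 (y (p e.1)) (y (p e.2))) - D.card * κ ≤
    Finset.expect Finset.univ (fun y : ι → Y =>
      ∏ e ∈ D ∪ T, K e.1 e.2 (y (p e.1)) (y (p e.2))) := by
  classical
  induction D using Finset.induction_on with
  | empty => simp
  | insert e0 D he0 ih =>
    have ih' := ih (Finset.disjoint_of_subset_left (Finset.subset_insert _ _) hTD)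
      (fun e he => hD e (Finset.mem_insert_of_mem he))
      (fun e he => hK e (Finset.mem_insert_of_mem he))
    have hlt := hD e0 (Finset.mem_insert_self _ _)
    have hnot : e0 ∉ D ∪ T := by
      rw [Finset.mem_union, not_or]
      exact ⟨he0, Finset.disjoint_left.1 hTD (Finset.mem_insert_self _ _)⟩
    have hlt' : ∀ e ∈ D ∪ T, e.1 < e.2 := by
      intro e he
      rcases Finset.mem_union.1 he with h | h
      · exact hD e (Finset.mem_insert_of_mem h)
      · exact hT e h
    set S := D ∪ T with hS
    have hsplit : ∀ y : ι → Y, ∏ e ∈ S, K e.1 e.2 (y (p e.1)) (y (p e.2)) =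
        (∏ e ∈ S with ¬ (e.1 = e0.2 ∨ e.2 = e0.2), K e.1 e.2 (y (p e.1)) (y (p e.2))) *
        (∏ e ∈ S with (e.1 = e0.2 ∨ e.2 = e0.2), K e.1 e.2 (y (p e.1)) (y (p e.2))) := by
      intro y
      rw [mul_comm, Finset.prod_filter_mul_prod_filter_not]
    have hsw := ex_swap (p e0.1) (p e0.2) (fun h => hlt.ne (hp h))
      (fun y : ι → Y => ∏ e ∈ S with ¬ (e.1 = e0.2 ∨ e.2 = e0.2),
        K e.1 e.2 (y (p e.1)) (y (p e.2)))
      (fun y : ι → Y => ∏ e ∈ S with (e.1 = e0.2 ∨ e.2 = e0.2),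
        K e.1 e.2 (y (p e.1)) (y (p e.2))) (K e0.1 e0.2) δ κ
      (fun y => Finset.prod_nonneg fun _ _ => hK0 _ _ _ _)
      (fun y => Finset.prod_le_one (fun _ _ => hK0 _ _ _ _) fun _ _ => hK1 _ _ _ _)
      (fun y => Finset.prod_nonneg fun _ _ => hK0 _ _ _ _)
      (fun y => Finset.prod_le_one (fun _ _ => hK0 _ _ _ _) fun _ _ => hK1 _ _ _ _)
      (by
        intro y b
        refine Finset.prod_congr rfl fun e he => ?_
        rw [Finset.mem_filter, not_or] at he
        rw [Function.update_of_ne (fun h => he.2.1 (hp h)),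
          Function.update_of_ne (fun h => he.2.2 (hp h))])
      (by
        intro y a
        refine Finset.prod_congr rfl fun e he => ?_
        rw [Finset.mem_filter] at he
        have hl := hlt' e he.1
        have hne : e ≠ e0 := fun h => hnot (h ▸ he.1)
        have h1 : e.1 ≠ e0.1 := by
          intro h
          rcases he.2 with h2 | h2
          · rw [h] at h2; exact hlt.ne h2
          · exact hne (Prod.ext h h2)
        have h2 : e.2 ≠ e0.1 := by
          intro h
          rcases he.2 with h2 | h2
          · rw [h, h2] at hl; exact absurd hl hlt.asymm
          · rw [h] at h2; exact hlt.ne h2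
        rw [Function.update_of_ne (fun h => h1 (hp h)),
          Function.update_of_ne (fun h => h2 (hp h))])
      (hK e0 (Finset.mem_insert_self _ _))
    rw [Finset.insert_union, ← hS, Finset.card_insert_of_notMem he0]
    have hsw2 : δ * Finset.expect Finset.univ (fun y : ι → Y =>
          ∏ e ∈ S, K e.1 e.2 (y (p e.1)) (y (p e.2))) - κ ≤
        Finset.expect Finset.univ (fun y : ι → Y =>
          (∏ e ∈ S, K e.1 e.2 (y (p e.1)) (y (p e.2))) *
            K e0.1 e0.2 (y (p e0.1)) (y (p e0.2))) := by
      rw [Finset.expect_congr rfl fun y _ => hsplit y, Finset.expect_congr rfl fun y _ =>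
        congrArg (fun t => t * K e0.1 e0.2 (y (p e0.1)) (y (p e0.2))) (hsplit y)]
      exact hsw
    have e2 : ∀ y : ι → Y, ∏ e ∈ insert e0 S, K e.1 e.2 (y (p e.1)) (y (p e.2)) =
        (∏ e ∈ S, K e.1 e.2 (y (p e.1)) (y (p e.2))) *
          K e0.1 e0.2 (y (p e0.1)) (y (p e0.2)) := by
      intro y
      rw [Finset.prod_insert hnot, mul_comm]
    simp_rw [e2]
    refine le_trans ?_ hsw2
    have h3 := mul_le_mul_of_nonneg_left ih' hδ0
    have h4 : δ * (D.card * κ) ≤ 1 * (D.card * κ) :=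
      mul_le_mul_of_nonneg_right hδ1 (by positivity)
    push_cast
    rw [pow_succ]
    linarith

/-- number of solutions of a linear equation -/
lemma lin_count (q d : ℕ) [Fact q.Prime] (w : Fin d → ZMod q) (hw : w ≠ 0) (s : ZMod q) :
    Finset.expect Finset.univ (fun c : Fin d → ZMod q =>
      if w ⬝ᵥ c = s then (1 : ℝ) else 0) = 1 / q := by
  classical
  obtain ⟨i, hi⟩ := Function.ne_iff.1 hw
  rw [ex_resample i]
  have : ∀ c : Fin d → ZMod q, Finset.expect Finset.univ (fun a : ZMod q =>
      if w ⬝ᵥ (Function.update c i a) = s then (1 : ℝ) else 0) = 1 / q := by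
    intro c
    have hiff : ∀ a : ZMod q, w ⬝ᵥ (Function.update c i a) = s ↔
        a = (s - w ⬝ᵥ (Function.update c i 0)) / w i := by
      intro a
      have h : w ⬝ᵥ (Function.update c i a) = w i * a + w ⬝ᵥ (Function.update c i 0) := by
        have : Function.update c i a = Pi.single i a + Function.update c i 0 := by
          funext j
          by_cases hj : j = i
          · subst hj; simp
          · simp [hj]
        rw [this, dotProduct_add, dotProduct_single]
      rw [h, eq_div_iff hi]
      constructor
      · intro h; rw [← h]; ring
      · intro h; rw [mul_comm, h]; ring
    simp_rw [hiff]
    rw [Fintype.expect_eq_sum_div_card]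
    simp
  simp_rw [this]
  simp

open Finset BigOperators in
/-- An explicit quasirandom graph of density `1/q`. -/
lemma exists_quasirandom (q : ℕ) (hq : q.Prime) (κ : ℝ) (hκ : 0 < κ) :
    ∃ (X : Type) (_ : Fintype X) (_ : Nonempty X) (N : X → X → Prop),
      (∀ x y, N x y → N y x) ∧ (1 / (Fintype.card X : ℝ) ≤ κ) ∧
      (∀ x, (𝔼 y, open Classical in if N x y then (1 : ℝ) else 0) = 1 / q) ∧
      (∀ f g : X → ℝ, (∀ y, 0 ≤ f y) → (∀ y, f y ≤ 1) → (∀ y, 0 ≤ g y) → (∀ y, g y ≤ 1) →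
      -κ ≤ 𝔼 a, 𝔼 b, f a * g b * ((open Classical in if N a b then (1 : ℝ) else 0) - 1 / q)) := by
  classical
  have : Fact q.Prime := ⟨hq⟩
  have hq2 : (2 : ℝ) ≤ q := by exact_mod_cast hq.two_le
  obtain ⟨d, hd⟩ : ∃ d : ℕ, (1 / 2 : ℝ) ^ d < min κ (κ ^ 2) :=
    exists_pow_lt_of_lt_one (by positivity) (by norm_num)
  have hqd : (1 / (q : ℝ)) ^ d ≤ (1 / 2 : ℝ) ^ d :=
    pow_le_pow_left₀ (by positivity) (by
      apply one_div_le_one_div_of_le <;> linarith) d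
  have hd1 : (1 / (q : ℝ)) ^ d ≤ κ := hqd.trans (hd.le.trans (min_le_left _ _))
  have hd2 : (1 / (q : ℝ)) ^ d ≤ κ ^ 2 := hqd.trans (hd.le.trans (min_le_right _ _))
  have hq0 : (0 : ℝ) < q := by linarith
  -- the density over the last coordinate
  have hlast : ∀ (a c : Fin d → ZMod q) (b : ZMod q),
      (𝔼 e : ZMod q, if b + e = a ⬝ᵥ c then (1 : ℝ) else 0) = 1 / q := by
    intro a c b
    have : ∀ e, b + e = a ⬝ᵥ c ↔ e = a ⬝ᵥ c - b := fun e => by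
      constructor
      · intro h; rw [← h]; ring
      · intro h; rw [h]; ring
    simp_rw [this]
    rw [Fintype.expect_eq_sum_div_card]
    simp
  -- codegrees
  let N : ((Fin d → ZMod q) × ZMod q) → ((Fin d → ZMod q) × ZMod q) → Prop :=
    fun x y => x.2 + y.2 = x.1 ⬝ᵥ y.1
  have hdeg : ∀ x, (𝔼 y, if N x y then (1 : ℝ) else 0) = 1 / q := by
    intro x
    rw [ex_prod]
    simp only [N]
    simp_rw [hlast]
    simp
  have hsymm : ∀ x y, N x y → N y x := by
    intro x y h
    simp only [N] at h ⊢
    rw [add_comm, h, dotProduct_comm]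
  have hcodeg : ∀ x x', (𝔼 y, (if N x y then (1 : ℝ) else 0) * (if N x' y then (1 : ℝ) else 0))
      ≤ 1 / (q : ℝ) ^ 2 + if x.1 = x'.1 then (1 : ℝ) else 0 := by
    intro x x'
    by_cases h : x.1 = x'.1
    · rw [if_pos h]
      have : (𝔼 y, (if N x y then (1 : ℝ) else 0) * (if N x' y then (1 : ℝ) else 0)) ≤ 1 :=
        Finset.expect_le Finset.univ_nonempty fun y _ => by split_ifs <;> norm_num
      have : 0 ≤ 1 / (q : ℝ) ^ 2 := by positivity
      linarith
    · rw [if_neg h, add_zero, ex_prod]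
      have h1 : ∀ c : Fin d → ZMod q, (𝔼 e : ZMod q, (if N x (c, e) then (1 : ℝ) else 0) *
          (if N x' (c, e) then (1 : ℝ) else 0)) =
          1 / q * (if (x.1 - x'.1) ⬝ᵥ c = x.2 - x'.2 then (1 : ℝ) else 0) := by
        intro c
        have h2 : ∀ e : ZMod q, (if N x (c, e) then (1 : ℝ) else 0) *
          (if N x' (c, e) then (1 : ℝ) else 0) = (if x.2 + e = x.1 ⬝ᵥ c then (1 : ℝ) else 0) *
            (if (x.1 - x'.1) ⬝ᵥ c = x.2 - x'.2 then (1 : ℝ) else 0) := by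
          intro e
          simp only [N]
          by_cases h3 : x.2 + e = x.1 ⬝ᵥ c
          · rw [if_pos h3, one_mul, one_mul]
            congr 1
            rw [sub_dotProduct, ← h3, eq_iff_iff]
            constructor
            · intro h; rw [← h]; ring
            · intro h
              have : x.2 + e - x'.1 ⬝ᵥ c = x.2 - x'.2 := h
              linear_combination this
          · rw [if_neg h3, zero_mul, zero_mul]
        simp_rw [h2]
        rw [← Finset.expect_mul, hlast]
      simp_rw [h1]
      rw [← Finset.mul_expect, lin_count q d _ (sub_ne_zero.2 h)]
      apply le_of_eq
      field_simp
  refine ⟨(Fin d → ZMod q) × ZMod q, inferInstance, inferInstance, N, hsymm, ?_, ?_, ?_⟩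
  · refine le_trans ?_ hd1
    rw [one_div_pow]
    apply one_div_le_one_div_of_le (by positivity)
    simp only [Fintype.card_prod, Fintype.card_fun, ZMod.card, Fintype.card_fin]
    push_cast
    have : (0 : ℝ) < (q : ℝ) ^ d := by positivity
    nlinarith
  · intro x
    convert hdeg x
  · intro f g hf0 hf1 hg0 hg1
    let M : ((Fin d → ZMod q) × ZMod q) → ((Fin d → ZMod q) × ZMod q) → ℝ :=
      fun a b => (if N a b then (1 : ℝ) else 0) - 1 / q
    have hM : ∀ a b, M a b = (if N a b then (1 : ℝ) else 0) - 1 / q := fun _ _ => rfl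
    have hMM : ∀ a a', (𝔼 b, M a b * M a' b) ≤ if a.1 = a'.1 then (1 : ℝ) else 0 := by
      intro a a'
      have e : ∀ b, M a b * M a' b = (if N a b then (1 : ℝ) else 0) * (if N a' b then (1 : ℝ) else 0)
        - 1 / q * (if N a b then (1 : ℝ) else 0) - 1 / q * (if N a' b then (1 : ℝ) else 0)
        + 1 / (q : ℝ) ^ 2 := by
        intro b; rw [hM, hM]; field_simp; ring
      simp_rw [e]
      rw [Finset.expect_add_distrib, Finset.expect_sub_distrib, Finset.expect_sub_distrib,
        ← Finset.mul_expect, ← Finset.mul_expect, hdeg, hdeg, Fintype.expect_const]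
      have := hcodeg a a'
      have e3 : 1 / (q : ℝ) * (1 / q) = 1 / (q : ℝ) ^ 2 := by field_simp
      rw [e3]
      linarith
    have hdiag : ∀ a : (Fin d → ZMod q) × ZMod q,
        (𝔼 a' : (Fin d → ZMod q) × ZMod q, if a.1 = a'.1 then (1 : ℝ) else 0) =
          (1 / (q : ℝ)) ^ d := by
      intro a
      rw [ex_prod]
      have hc : ∀ c : Fin d → ZMod q, (𝔼 _b : ZMod q, if a.1 = c then (1 : ℝ) else 0) =
        if a.1 = c then (1 : ℝ) else 0 := fun c => Fintype.expect_const _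
      simp only [hc]
      rw [Fintype.expect_eq_sum_div_card]
      simp
    have hmom : (𝔼 b, (𝔼 a, f a * M a b) ^ 2) ≤ κ ^ 2 := by
      have e : ∀ b, (𝔼 a, f a * M a b) ^ 2 = 𝔼 a, 𝔼 a', f a * f a' * (M a b * M a' b) := by
        intro b
        rw [sq, Finset.expect_mul_expect]
        refine Finset.expect_congr rfl fun a _ => Finset.expect_congr rfl fun a' _ => by ring
      simp_rw [e]
      rw [Finset.expect_comm]
      refine le_trans ?_ hd2
      refine Finset.expect_le Finset.univ_nonempty fun a _ => ?_
      rw [Finset.expect_comm, ← hdiag a]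
      refine Finset.expect_le_expect fun a' _ => ?_
      rw [← Finset.mul_expect]
      have h1 := hMM a a'
      have h2 : 0 ≤ f a * f a' := mul_nonneg (hf0 _) (hf0 _)
      have h3 : f a * f a' ≤ 1 := mul_le_one₀ (hf1 _) (hf0 _) (hf1 _)
      refine (mul_le_mul_of_nonneg_left h1 h2).trans ?_
      refine (mul_le_mul_of_nonneg_right h3 (by split_ifs <;> norm_num)).trans (by rw [one_mul])
    have hmain : (𝔼 b, g b * (𝔼 a, f a * M a b)) ^ 2 ≤ κ ^ 2 := by
      refine (Finset.expect_mul_sq_le_sq_mul_sq _ _ _).trans ?_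
      have hg : (𝔼 b, g b ^ 2) ≤ 1 :=
        Finset.expect_le Finset.univ_nonempty fun b _ => pow_le_one₀ (hg0 b) (hg1 b)
      refine (mul_le_mul hg hmom (Finset.expect_nonneg fun _ _ => sq_nonneg _) zero_le_one).trans ?_
      rw [one_mul]
    have h5 := (abs_le_of_sq_le_sq' hmain hκ.le).1
    refine h5.trans (le_of_eq ?_)
    rw [Finset.expect_comm]
    refine Finset.expect_congr rfl fun b _ => ?_
    rw [Finset.mul_expect]
    refine Finset.expect_congr rfl fun a _ => ?_
    by_cases h : N a b
    · simp only [hM, if_pos h]; ring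
    · simp only [hM, if_neg h]; ring

/-- The counting argument: a partite system of red graphs `R` and quasirandom relations `L`
contains a copy of `H`, with `R` on edges and `L` on non-edges. -/
lemma core_count {Y : Type*} [Fintype Y] [Nonempty Y] (ρ k : ℕ) (H : SimpleGraph (Fin k))
    (C : Fin k → Fin (ρ + 1)) (hC : ∀ u v, H.Adj u v → C u ≠ C v)
    (R L : Fin (ρ + 1) → Fin (ρ + 1) → Y → Y → Prop)
    (hRs : ∀ i j a b, R i j a b → R j i b a)
    (θ η δ κ : ℝ) (hθ : 0 ≤ θ) (hη : 0 ≤ η) (hδ0 : 0 ≤ δ) (hδ1 : δ ≤ 1) (hκ : 0 ≤ κ)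
    (hR : ∀ i j, i < j → ∀ y', Finset.expect Finset.univ
      (fun y => open Classical in if R i j y y' then (0 : ℝ) else 1) ≤ θ)
    (hθη : ρ * θ ≤ 1 - η)
    (hL : ∀ i j, ∀ f g : Y → ℝ, (∀ y, 0 ≤ f y) → (∀ y, f y ≤ 1) → (∀ y, 0 ≤ g y) →
      (∀ y, g y ≤ 1) →
      -κ ≤ Finset.expect Finset.univ (fun a => Finset.expect Finset.univ
        (fun b => f a * g b * ((open Classical in if L i j a b then (1 : ℝ) else 0) - δ))))
    (hpos : (k : ℝ) ^ 2 * κ < δ ^ (k ^ 2) * (η ^ (ρ + 1)) ^ (k ^ (ρ + 1))) :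
    ∃ y : Fin k → Y, ∀ u v, u < v →
      (H.Adj u v → R (C u) (C v) (y u) (y v)) ∧ (¬ H.Adj u v → L (C u) (C v) (y u) (y v)) := by
  classical
  let K : Fin k → Fin k → Y → Y → ℝ := fun u v a b =>
    if (H.Adj u v → R (C u) (C v) a b) ∧ (¬ H.Adj u v → L (C u) (C v) a b) then 1 else 0
  have hK0 : ∀ u v a b, 0 ≤ K u v a b := fun u v a b => by
    simp only [K]; split_ifs <;> norm_num
  have hK1 : ∀ u v a b, K u v a b ≤ 1 := fun u v a b => by
    simp only [K]; split_ifs <;> norm_num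
  let T : Finset (Fin k × Fin k) := {e | e.1 < e.2 ∧ H.Adj e.1 e.2}
  let D : Finset (Fin k × Fin k) := {e | e.1 < e.2 ∧ ¬ H.Adj e.1 e.2}
  let p : Fin k → Fin (ρ + 1) × Fin k := fun u => (C u, u)
  have hp : Function.Injective p := fun u v h => (Prod.ext_iff.1 h).2
  have hsw := ex_swap_all k p hp K δ κ hδ0 hδ1 hκ hK0 hK1 T D
    (fun e he => by simp only [T, Finset.mem_filter] at he; exact he.2.1)
    (by
      rw [Finset.disjoint_left]
      intro e he he'
      simp only [T, D, Finset.mem_filter] at he he'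
      exact he.2.2 he'.2.2)
    (fun e he => by simp only [D, Finset.mem_filter] at he; exact he.2.1)
    (by
      intro e he f g hf0 hf1 hg0 hg1
      simp only [D, Finset.mem_filter] at he
      refine (hL (C e.1) (C e.2) f g hf0 hf1 hg0 hg1).trans (le_of_eq ?_)
      refine Finset.expect_congr rfl fun a _ => Finset.expect_congr rfl fun b _ => ?_
      have hn := he.2.2
      simp only [K, hn, not_false_eq_true, forall_true_left, false_imp_iff, true_and])
  -- lower bound for the clique count
  have hcl := ex_clique θ η hη hθ (ρ + 1) R hR (by push_cast; linarith)
  let w : (Fin (ρ + 1) → Y) → ℝ := fun y => if ∀ i j, i < j → R i j (y i) (y j) then 1 else 0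
  have hw0 : ∀ y, 0 ≤ w y := fun y => by simp only [w]; split_ifs <;> norm_num
  have hbl := ex_blowup k (ρ + 1) w hw0
  have hcl2 : (η ^ (ρ + 1)) ^ (k ^ (ρ + 1)) ≤ (Finset.expect Finset.univ w) ^ (k ^ (ρ + 1)) :=
    pow_le_pow_left₀ (by positivity) hcl _
  have hP : Finset.expect Finset.univ (fun z : Fin (ρ + 1) → (Fin k → Y) =>
        ∏ σ : Fin (ρ + 1) → Fin k, w (fun j => z j (σ j))) ≤
      Finset.expect Finset.univ (fun y : Fin (ρ + 1) × Fin k → Y =>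
        ∏ e ∈ T, K e.1 e.2 (y (p e.1)) (y (p e.2))) := by
    rw [← Fintype.expect_equiv (Equiv.curry (Fin (ρ + 1)) (Fin k) Y)
      (fun y => ∏ σ : Fin (ρ + 1) → Fin k, w (fun j => y (j, σ j))) _ (fun y => rfl)]
    refine Finset.expect_le_expect fun y _ => ?_
    by_cases hall : ∀ σ : Fin (ρ + 1) → Fin k, w (fun j => y (j, σ j)) = 1
    · have hone : ∏ e ∈ T, K e.1 e.2 (y (p e.1)) (y (p e.2)) = 1 := by
        refine Finset.prod_eq_one fun e he => ?_
        simp only [T, Finset.mem_filter] at he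
        have hne := hC _ _ he.2.2
        have hσ := hall (Function.update (fun _ => e.1) (C e.2) e.2)
        have hall2 : ∀ i j, i < j → R i j
            (y (i, Function.update (fun _ => e.1) (C e.2) e.2 i))
            (y (j, Function.update (fun _ => e.1) (C e.2) e.2 j)) := by
          by_contra hcon
          simp only [w] at hσ
          rw [if_neg hcon] at hσ
          exact zero_ne_one hσ
        have hRR : R (C e.1) (C e.2) (y (C e.1, e.1)) (y (C e.2, e.2)) := by
          rcases lt_or_gt_of_ne hne with h | h
          · have := hall2 _ _ h
            simpa [hne] using this
          · have := hall2 _ _ h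
            refine hRs _ _ _ _ ?_
            simpa [hne] using this
        simp only [K]
        rw [if_pos]
        exact ⟨fun _ => hRR, fun h => absurd he.2.2 h⟩
      rw [hone]
      refine Finset.prod_le_one (fun _ _ => hw0 _) fun σ _ => le_of_eq (hall σ)
    · push Not at hall
      obtain ⟨σ, hσ⟩ := hall
      have hz : w (fun j => y (j, σ j)) = 0 := by
        simp only [w] at hσ ⊢
        split_ifs at hσ ⊢ <;> simp_all
      rw [Finset.prod_eq_zero (Finset.mem_univ σ) hz]
      exact Finset.prod_nonneg fun _ _ => hK0 _ _ _ _
  have hcard : (D.card : ℕ) ≤ k ^ 2 := by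
    refine (Finset.card_le_univ D).trans ?_
    simp [sq]
  have hcard' : (D.card : ℝ) ≤ (k : ℝ) ^ 2 := by exact_mod_cast hcard
  have hEP := hcl2.trans (hbl.trans hP)
  have hη' : 0 ≤ (η ^ (ρ + 1)) ^ (k ^ (ρ + 1)) := by positivity
  have h1 : δ ^ (k ^ 2) * (η ^ (ρ + 1)) ^ (k ^ (ρ + 1)) ≤
      δ ^ D.card * Finset.expect Finset.univ (fun y : Fin (ρ + 1) × Fin k → Y =>
        ∏ e ∈ T, K e.1 e.2 (y (p e.1)) (y (p e.2))) :=
    mul_le_mul (pow_le_pow_of_le_one hδ0 hδ1 hcard) hEP hη' (by positivity)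
  have h2 : (D.card : ℝ) * κ ≤ (k : ℝ) ^ 2 * κ := mul_le_mul_of_nonneg_right hcard' hκ
  have h3 : 0 < Finset.expect Finset.univ (fun y : Fin (ρ + 1) × Fin k → Y =>
      ∏ e ∈ D ∪ T, K e.1 e.2 (y (p e.1)) (y (p e.2))) := by linarith
  obtain ⟨y, -, hy⟩ := Finset.exists_ne_zero_of_expect_ne_zero h3.ne'
  refine ⟨fun u => y (p u), fun u v huv => ?_⟩
  have hmem : (u, v) ∈ D ∪ T := by
    simp only [D, T, Finset.mem_union, Finset.mem_filter, Finset.mem_univ, true_and]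
    tauto
  have hne := Finset.prod_ne_zero_iff.1 hy (u, v) hmem
  by_contra hcon
  apply hne
  simp only [K]
  rw [if_neg hcon]

lemma ArrowsInd.of_iso {V W α β : Type*} {F : SimpleGraph V} {F' : SimpleGraph W}
    {H : SimpleGraph α} {G : SimpleGraph β} (e : F ≃g F') (h : ArrowsInd F H G) :
    ArrowsInd F' H G := by
  intro c
  rcases h (fun s => c (s.map e)) with ⟨f, hf⟩ | ⟨g, hg⟩
  · exact Or.inl ⟨f.trans e.toEmbedding, fun u v huv => by simpa using hf u v huv⟩
  · exact Or.inr ⟨g.trans e.toEmbedding, fun u v huv => by simpa using hg u v huv⟩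

/-- The layer of a label. -/
def layIR (ρ m : ℕ) : (Fin ρ × Fin m) ⊕ Unit → Fin (ρ + 1)
  | Sum.inl p => p.1.castSucc
  | Sum.inr _ => Fin.last ρ

/-- The host graph. -/
def hostIR {X : Type} (N : X → X → Prop) (hN : ∀ x y, N x y → N y x) (ρ m : ℕ) :
    SimpleGraph (X × ((Fin ρ × Fin m) ⊕ Unit)) where
  Adj v w := layIR ρ m v.2 ≠ layIR ρ m w.2 ∧ ¬ N v.1 w.1
  symm := ⟨fun _ _ h => ⟨h.1.symm, fun h' => h.2 (hN _ _ h')⟩⟩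
  loopless := ⟨fun _ h => h.1 rfl⟩

/-- The parametrization of the layers. -/
def parIR {X : Type} (ρ m : ℕ) (j : Fin (ρ + 1)) (y : X × Fin m) :
    X × ((Fin ρ × Fin m) ⊕ Unit) :=
  (y.1, Fin.lastCases (motive := fun _ => (Fin ρ × Fin m) ⊕ Unit) (Sum.inr ())
    (fun i => Sum.inl (i, y.2)) j)

lemma lay_par {X : Type} (ρ m : ℕ) (j : Fin (ρ + 1)) (y : X × Fin m) :
    layIR ρ m (parIR ρ m j y).2 = j := by
  refine Fin.lastCases ?_ (fun i => ?_) j <;> simp [parIR, layIR]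

lemma par_inj {X : Type} (ρ m : ℕ) (i : Fin ρ) :
    Function.Injective (parIR (X := X) ρ m i.castSucc) := by
  rintro ⟨x, s⟩ ⟨x', s'⟩ h
  simpa [parIR] using h

/-- No blue star implies few blue neighbours. -/
lemma star_of_many {X : Type} [Fintype X] (N : X → X → Prop) (hN : ∀ x y, N x y → N y x)
    (ρ m n : ℕ) (c : Sym2 (X × ((Fin ρ × Fin m) ⊕ Unit)) → Bool)
    (v : X × ((Fin ρ × Fin m) ⊕ Unit)) (i : Fin ρ) (S : Finset (X × Fin m))
    (hS : ∀ y ∈ S, (hostIR N hN ρ m).Adj v (parIR ρ m i.castSucc y) ∧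
      c s(v, parIR ρ m i.castSucc y) = false) (hn : n ≤ S.card) :
    ∃ g : StarGraph n ↪g hostIR N hN ρ m, ∀ a b, (StarGraph n).Adj a b →
      c s(g a, g b) = false := by
  let em : Fin n ↪ X × Fin m :=
    ((Fin.castLEEmb hn).trans S.equivFin.symm.toEmbedding).trans (Function.Embedding.subtype _)
  have hem : ∀ t, em t ∈ S := fun t => (S.equivFin.symm (Fin.castLE hn t)).2
  let g : Fin 1 ⊕ Fin n → X × ((Fin ρ × Fin m) ⊕ Unit) :=
    Sum.elim (fun _ => v) (fun t => parIR ρ m i.castSucc (em t))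
  have hnot : ∀ a b, ¬ (hostIR N hN ρ m).Adj (parIR ρ m i.castSucc a)
      (parIR ρ m i.castSucc b) := by
    intro a b h
    exact h.1 (by rw [lay_par, lay_par])
  have hinj : Function.Injective g := by
    rintro (a | a) (b | b) h
    · rw [Subsingleton.elim a b]
    · exact absurd h (hS _ (hem b)).1.ne
    · exact absurd h.symm (hS _ (hem a)).1.ne
    · exact congrArg _ (em.injective (par_inj ρ m i h))
  refine ⟨⟨⟨g, hinj⟩, ?_⟩, ?_⟩
  · rintro (a | a) (b | b)
    · simp [g, StarGraph]
    · simpa [g, StarGraph] using (hS _ (hem b)).1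
    · simpa [g, StarGraph] using (hS _ (hem a)).1.symm
    · simpa [g, StarGraph] using hnot _ _
  · rintro (a | a) (b | b) h
    · simp [StarGraph] at h
    · exact (hS _ (hem b)).2
    · have := (hS _ (hem a)).2
      rw [Sym2.eq_swap] at this
      exact this
    · simp [StarGraph] at h

lemma arrows_host {X : Type} [Fintype X] [Nonempty X] (N : X → X → Prop)
    (hN : ∀ x y, N x y → N y x) (ρ m n k : ℕ) (hm : 0 < m) (H : SimpleGraph (Fin k))
    (C : Fin k → Fin (ρ + 1)) (hC : ∀ u v, H.Adj u v → C u ≠ C v)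
    (θ η δ κ : ℝ) (hη : 0 ≤ η) (hδ0 : 0 ≤ δ) (hδ1 : δ ≤ 1) (hκ : 0 ≤ κ)
    (hX : 1 / (Fintype.card X : ℝ) ≤ κ)
    (hdeg : ∀ x, Finset.expect Finset.univ
      (fun y => open Classical in if N x y then (1 : ℝ) else 0) = δ)
    (hquasi : ∀ f g : X → ℝ, (∀ y, 0 ≤ f y) → (∀ y, f y ≤ 1) → (∀ y, 0 ≤ g y) →
      (∀ y, g y ≤ 1) →
      -κ ≤ Finset.expect Finset.univ (fun a => Finset.expect Finset.univ
        (fun b => f a * g b * ((open Classical in if N a b then (1 : ℝ) else 0) - δ))))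
    (hθ : (n : ℝ) / (Fintype.card X * m) + δ ≤ θ)
    (hθη : ρ * θ ≤ 1 - η)
    (hpos : (k : ℝ) ^ 2 * κ < δ ^ (k ^ 2) * (η ^ (ρ + 1)) ^ (k ^ (ρ + 1))) :
    ArrowsInd (hostIR N hN ρ m) H (StarGraph n) := by
  classical
  intro c
  by_cases hstar : ∃ g : StarGraph n ↪g hostIR N hN ρ m, ∀ a b, (StarGraph n).Adj a b →
      c s(g a, g b) = false
  · exact Or.inr hstar
  left
  have : NeZero m := ⟨hm.ne'⟩
  have hθ0 : 0 ≤ θ := le_trans (by positivity) hθ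
  let R : Fin (ρ + 1) → Fin (ρ + 1) → X × Fin m → X × Fin m → Prop := fun i j a b =>
    (hostIR N hN ρ m).Adj (parIR ρ m i a) (parIR ρ m j b) ∧
      c s(parIR ρ m i a, parIR ρ m j b) = true
  let L : Fin (ρ + 1) → Fin (ρ + 1) → X × Fin m → X × Fin m → Prop := fun i j a b =>
    if i = j then a.1 ≠ b.1 else N a.1 b.1
  have hRs : ∀ i j a b, R i j a b → R j i b a := by
    intro i j a b h
    refine ⟨h.1.symm, ?_⟩
    rw [Sym2.eq_swap]; exact h.2
  have hLs : ∀ i j a b, L i j a b → L j i b a := by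
    intro i j a b h
    simp only [L] at h ⊢
    by_cases hij : i = j
    · subst hij; rw [if_pos rfl] at h ⊢; exact h.symm
    · rw [if_neg hij] at h; rw [if_neg (Ne.symm hij)]; exact hN _ _ h
  have hR : ∀ i j, i < j → ∀ y', Finset.expect Finset.univ
      (fun y => if R i j y y' then (0 : ℝ) else 1) ≤ θ := by
    intro i j hij y'
    obtain ⟨i, rfl⟩ := Fin.exists_castSucc_eq.2 (Fin.ne_last_of_lt hij)
    let S : Finset (X × Fin m) := {y | (hostIR N hN ρ m).Adj (parIR ρ m j y')
      (parIR ρ m i.castSucc y) ∧ c s(parIR ρ m j y', parIR ρ m i.castSucc y) = false}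
    have hS : S.card ≤ n := by
      by_contra hcon
      exact hstar (star_of_many N hN ρ m n c (parIR ρ m j y') i S
        (fun y hy => by simpa [S] using hy) (by omega))
    have hpt : ∀ y : X × Fin m, (if R i.castSucc j y y' then (0 : ℝ) else 1) ≤
        (if y ∈ S then (1 : ℝ) else 0) + (if N y'.1 y.1 then (1 : ℝ) else 0) := by
      intro y
      by_cases h1 : N y'.1 y.1
      · rw [if_pos h1]; split_ifs <;> norm_num
      · by_cases h2 : y ∈ S
        · rw [if_pos h2]; split_ifs <;> norm_num
        · have hadj : (hostIR N hN ρ m).Adj (parIR ρ m j y') (parIR ρ m i.castSucc y) :=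
            ⟨by rw [lay_par, lay_par]; exact hij.ne', h1⟩
          have hRR : R i.castSucc j y y' := by
            refine hRs _ _ _ _ ⟨hadj, ?_⟩
            by_contra hcon
            exact h2 (by simpa [S, hadj] using hcon)
          rw [if_pos hRR]; split_ifs; norm_num
    refine (Finset.expect_le_expect fun y _ => hpt y).trans ?_
    rw [Finset.expect_add_distrib]
    have e1 : Finset.expect Finset.univ (fun y : X × Fin m => if y ∈ S then (1 : ℝ) else 0) ≤
        (n : ℝ) / (Fintype.card X * m) := by
      rw [Fintype.expect_eq_sum_div_card, Finset.sum_boole]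
      simp only [Finset.filter_univ_mem, Fintype.card_prod, Fintype.card_fin, Nat.cast_mul]
      gcongr
    have e2 : Finset.expect Finset.univ
        (fun y : X × Fin m => if N y'.1 y.1 then (1 : ℝ) else 0) = δ := by
      rw [ex_prod]
      have e3 : ∀ x : X, Finset.expect Finset.univ
        (fun _ : Fin m => if N y'.1 x then (1 : ℝ) else 0) = if N y'.1 x then (1 : ℝ) else 0 :=
        fun x => Fintype.expect_const _
      simp only [e3]
      convert hdeg y'.1
    linarith
  have hL : ∀ i j, ∀ f g : X × Fin m → ℝ, (∀ y, 0 ≤ f y) → (∀ y, f y ≤ 1) → (∀ y, 0 ≤ g y) →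
      (∀ y, g y ≤ 1) →
      -κ ≤ Finset.expect Finset.univ (fun a => Finset.expect Finset.univ
        (fun b => f a * g b * ((if L i j a b then (1 : ℝ) else 0) - δ))) := by
    intro i j f g hf0 hf1 hg0 hg1
    by_cases hij : i = j
    · refine Finset.le_expect Finset.univ_nonempty fun a _ => ?_
      have e1 : Finset.expect Finset.univ (fun b : X × Fin m => if a.1 = b.1 then (1 : ℝ) else 0)
          = 1 / (Fintype.card X : ℝ) := by
        rw [ex_prod]
        have e3 : ∀ x : X, Finset.expect Finset.univ
          (fun _ : Fin m => if a.1 = x then (1 : ℝ) else 0) = if a.1 = x then (1 : ℝ) else 0 :=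
          fun x => Fintype.expect_const _
        simp only [e3]
        rw [Fintype.expect_eq_sum_div_card]
        simp
      have e2 : Finset.expect Finset.univ
          (fun b : X × Fin m => -(if a.1 = b.1 then (1 : ℝ) else 0)) ≤
          Finset.expect Finset.univ
            (fun b => f a * g b * ((if L i j a b then (1 : ℝ) else 0) - δ)) := by
        refine Finset.expect_le_expect fun b _ => ?_
        have h2 : 0 ≤ f a * g b := mul_nonneg (hf0 _) (hg0 _)
        have h3 : f a * g b ≤ 1 := mul_le_one₀ (hf1 _) (hg0 _) (hg1 _)
        by_cases hab : a.1 = b.1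
        · have : ¬ L i j a b := by simp [L, hij, hab]
          rw [if_pos hab, if_neg this]
          nlinarith
        · have : L i j a b := by simp [L, hij, hab]
          rw [if_neg hab, if_pos this]
          nlinarith
      rw [Finset.expect_neg_distrib, e1] at e2
      linarith
    · have hq := hquasi (fun x => Finset.expect Finset.univ (fun s : Fin m => f (x, s)))
        (fun x => Finset.expect Finset.univ (fun s : Fin m => g (x, s)))
        (fun x => Finset.expect_nonneg fun _ _ => hf0 _)
        (fun x => Finset.expect_le Finset.univ_nonempty fun _ _ => hf1 _)
        (fun x => Finset.expect_nonneg fun _ _ => hg0 _)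
        (fun x => Finset.expect_le Finset.univ_nonempty fun _ _ => hg1 _)
      refine hq.trans (le_of_eq ?_)
      rw [ex_prod]
      refine Finset.expect_congr rfl fun x _ => ?_
      have e3 : ∀ s : Fin m, Finset.expect Finset.univ (fun b : X × Fin m =>
          f (x, s) * g b * ((if L i j (x, s) b then (1 : ℝ) else 0) - δ)) =
          Finset.expect Finset.univ (fun x' : X => Finset.expect Finset.univ (fun s' : Fin m =>
            f (x, s) * g (x', s') * ((if N x x' then (1 : ℝ) else 0) - δ))) := by
        intro s
        rw [ex_prod]
        refine Finset.expect_congr rfl fun x' _ => Finset.expect_congr rfl fun s' _ => ?_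
        simp only [L, hij, if_false]
      simp_rw [e3]
      rw [Finset.expect_comm]
      refine Finset.expect_congr rfl fun x' _ => ?_
      rw [Finset.expect_mul_expect, Finset.expect_mul]
      refine Finset.expect_congr rfl fun s _ => ?_
      rw [Finset.expect_mul]
  obtain ⟨y, hy⟩ := core_count ρ k H C hC R L hRs θ η δ κ hθ0 hη hδ0 hδ1 hκ
    (fun i j hij y' => by convert hR i j hij y') hθη
    (fun i j f g h1 h2 h3 h4 => by convert hL i j f g h1 h2 h3 h4) hpos
  have hyy : ∀ u v, u ≠ v → (H.Adj u v → R (C u) (C v) (y u) (y v)) ∧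
      (¬ H.Adj u v → L (C u) (C v) (y u) (y v)) := by
    intro u v huv
    rcases lt_or_gt_of_ne huv with h | h
    · exact hy u v h
    · exact ⟨fun ha => hRs _ _ _ _ ((hy v u h).1 ha.symm),
        fun ha => hLs _ _ _ _ ((hy v u h).2 fun h' => ha h'.symm)⟩
  have hnadj : ∀ u v, u ≠ v → ¬ H.Adj u v →
      parIR ρ m (C u) (y u) ≠ parIR ρ m (C v) (y v) ∧
      ¬ (hostIR N hN ρ m).Adj (parIR ρ m (C u) (y u)) (parIR ρ m (C v) (y v)) := by
    intro u v huv ha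
    have hl := (hyy u v huv).2 ha
    simp only [L] at hl
    by_cases hc : C u = C v
    · rw [if_pos hc] at hl
      exact ⟨fun h => hl (Prod.ext_iff.1 h).1, fun h => h.1 (by rw [lay_par, lay_par, hc])⟩
    · rw [if_neg hc] at hl
      refine ⟨fun h => hc ?_, fun h => h.2 hl⟩
      have := congrArg (fun v => layIR ρ m v.2) h
      simpa only [lay_par] using this
  refine ⟨⟨⟨fun u => parIR ρ m (C u) (y u), ?_⟩, ?_⟩, ?_⟩
  · intro u v h
    by_contra huv
    by_cases ha : H.Adj u v
    · exact ((hyy u v huv).1 ha).1.ne h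
    · exact (hnadj u v huv ha).1 h
  · intro u v
    by_cases huv : u = v
    · subst huv; simp
    · by_cases ha : H.Adj u v
      · exact ⟨fun _ => ha, fun _ => ((hyy u v huv).1 ha).1⟩
      · exact ⟨fun h => absurd h (hnadj u v huv ha).2, fun h => absurd h ha⟩
  · intro u v ha
    exact ((hyy u v ha.ne).1 ha).2

/-- for γ > 0 and H with an edge and chromatic number r, for all
sufficiently large n, IR(H, K_{1,n}) ≤ (r−1)²·n + γ·n. -/
theorem IR_upper_chromatic (γ : ℝ) (hγ : 0 < γ) (k : ℕ) (H : SimpleGraph (Fin k))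
    (hedge : ∃ u v, H.Adj u v) (r : ℕ) (hr : H.chromaticNumber = r) :
    ∃ n₀ : ℕ, ∀ n : ℕ, n₀ < n →
      (IR H (StarGraph n) : ℝ) ≤ ((r : ℝ) - 1) ^ 2 * n + γ * n := by
  have hcol : H.Colorable r := SimpleGraph.chromaticNumber_le_iff_colorable.1 hr.le
  obtain ⟨C⟩ := hcol
  obtain ⟨u0, v0, huv0⟩ := hedge
  have hne0 := C.valid huv0
  obtain ⟨ρ, hρ, rfl⟩ : ∃ ρ : ℕ, 1 ≤ ρ ∧ r = ρ + 1 := by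
    have h1 := (C u0).2
    have h2 := (C v0).2
    have h3 : (C u0 : ℕ) ≠ C v0 := fun h => hne0 (Fin.ext h)
    exact ⟨r - 1, by omega, by omega⟩
  have hρ1 : (1 : ℝ) ≤ ρ := by exact_mod_cast hρ
  have hρ0 : (0 : ℝ) < ρ := by linarith
  obtain ⟨β, hβ⟩ : ∃ β : ℝ, β = γ / (2 * ρ) := ⟨_, rfl⟩
  have hβ0 : 0 < β := by rw [hβ]; positivity
  obtain ⟨η, hηd⟩ : ∃ η : ℝ, η = β / (2 * (ρ + β)) := ⟨_, rfl⟩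
  have hη0 : 0 < η := by rw [hηd]; positivity
  obtain ⟨q, hqge, hq⟩ := Nat.exists_infinite_primes (⌈2 * ρ * (ρ + β) / β⌉₊ + 1)
  have hq1 : 2 * ρ * (ρ + β) / β ≤ q := by
    refine (Nat.le_ceil _).trans ?_
    exact_mod_cast (Nat.le_succ _).trans hqge
  have hq2 : (2 : ℝ) ≤ q := by exact_mod_cast hq.two_le
  have hq0 : (0 : ℝ) < q := by linarith
  have hδ0 : 0 < 1 / (q : ℝ) := by positivity
  have hδ1 : 1 / (q : ℝ) ≤ 1 := by
    rw [div_le_one hq0]; linarith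
  have hδ : 1 / (q : ℝ) ≤ β / (2 * ρ * (ρ + β)) := by
    rw [div_le_div_iff₀ hq0 (by positivity)]
    rw [div_le_iff₀ hβ0] at hq1
    linarith
  obtain ⟨A, hA⟩ : ∃ A : ℝ, A = (1 / (q : ℝ)) ^ (k ^ 2) * (η ^ (ρ + 1)) ^ (k ^ (ρ + 1)) :=
    ⟨_, rfl⟩
  have hA0 : 0 < A := by rw [hA]; positivity
  obtain ⟨κ, hκd⟩ : ∃ κ : ℝ, κ = A / ((k : ℝ) ^ 2 + 1) := ⟨_, rfl⟩
  have hκ0 : 0 < κ := by rw [hκd]; positivity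
  have hpos : (k : ℝ) ^ 2 * κ < A := by
    have : ((k : ℝ) ^ 2 + 1) * κ = A := by rw [hκd]; field_simp
    linarith
  obtain ⟨X, iX, neX, N, hN, hX, hdeg, hquasi⟩ := exists_quasirandom q hq κ hκ0
  have hM0 : (0 : ℝ) < Fintype.card X := by exact_mod_cast Fintype.card_pos
  refine ⟨⌈2 * (ρ + 1) * Fintype.card X / γ⌉₊, fun n hn => ?_⟩
  have hn1 : 2 * (ρ + 1) * Fintype.card X / γ ≤ n :=
    (Nat.le_ceil _).trans (by exact_mod_cast hn.le)
  have hn0 : (0 : ℝ) < n := by exact_mod_cast (Nat.zero_le _).trans_lt hn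
  rw [div_le_iff₀ hγ] at hn1
  obtain ⟨m, hmd⟩ : ∃ m : ℕ, m = ⌈(ρ + β) * n / Fintype.card X⌉₊ := ⟨_, rfl⟩
  have hm1 : (ρ + β) * n / Fintype.card X ≤ m := by rw [hmd]; exact Nat.le_ceil _
  have hm2 : (m : ℝ) < (ρ + β) * n / Fintype.card X + 1 := by
    rw [hmd]; exact Nat.ceil_lt_add_one (by positivity)
  have hm0 : (0 : ℝ) < m := lt_of_lt_of_le (by positivity) hm1
  have hm : 0 < m := by exact_mod_cast hm0
  rw [div_le_iff₀ hM0] at hm1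
  have hm3 : (m : ℝ) * Fintype.card X < (ρ + β) * n + Fintype.card X := by
    have := mul_lt_mul_of_pos_right hm2 hM0
    rwa [add_mul, div_mul_cancel₀ _ hM0.ne', one_mul] at this
  have hfrac : (n : ℝ) / (Fintype.card X * m) ≤ 1 / (ρ + β) := by
    rw [div_le_div_iff₀ (by positivity) (by positivity)]
    linarith
  have harrow : ArrowsInd (hostIR N hN ρ m) H (StarGraph n) := by
    refine arrows_host N hN ρ m n k hm H C (fun u v h => C.valid h)
      (1 / (ρ + β) + β / (2 * ρ * (ρ + β))) η (1 / q) κ hη0.le hδ0.le hδ1 hκ0.le hX hdeg hquasi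
      (add_le_add hfrac hδ) ?_ (hA ▸ hpos)
    rw [hηd]
    apply le_of_eq
    field_simp
    ring
  have hcard : Fintype.card (X × ((Fin ρ × Fin m) ⊕ Unit)) =
      Fintype.card X * (ρ * m + 1) := by simp
  have e := Fintype.equivFinOfCardEq hcard
  have hle : IR H (StarGraph n) ≤ Fintype.card X * (ρ * m + 1) :=
    Nat.sInf_le ⟨(hostIR N hN ρ m).map e.toEmbedding,
      harrow.of_iso (SimpleGraph.Iso.map e _)⟩
  have hle' : (IR H (StarGraph n) : ℝ) ≤ Fintype.card X * (ρ * m + 1) := by exact_mod_cast hle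
  refine hle'.trans ?_
  push_cast
  have h5 := mul_lt_mul_of_pos_left hm3 hρ0
  have h6 : ρ * (β * n) = γ * n / 2 := by rw [hβ]; field_simp
  have h7 : ((ρ : ℝ) + 1 - 1) ^ 2 = ρ ^ 2 := by ring
  rw [h7]
  nlinarith
end

section
/- For every integer t ≥ 2 there exist a constant c > 0 and n₀ ∈ ℕ such that for all integers n > n₀: IR(2K₂, K_{1,n}) ≤ n + c·n·(log n)^{−1/4}, IR(P₄, K_{1,n}) ≤ n + c·n·(log n)^{−1/4}, and IR(K_{t,t}, K_{1,n}) ≤ n + c·n^{1 − 1/(2t)}. -/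
open SimpleGraph

/-- The graph 2K₂ consisting of two disjoint edges. -/
def TwoK2 : SimpleGraph (Fin 4) :=
  SimpleGraph.fromEdgeSet {s((0 : Fin 4), (1 : Fin 4)), s((2 : Fin 4), (3 : Fin 4))}

/-- bipartite graph of a relation -/
def bipG {A B : Type*} (r : A → B → Prop) : SimpleGraph (A ⊕ B) where
  Adj x y := match x, y with
    | .inl a, .inr b => r a b
    | .inr b, .inl a => r a b
    | _, _ => False
  symm := ⟨by rintro (a | b) (a' | b') h <;> exact h⟩
  loopless := ⟨by rintro (a | b) h <;> exact h⟩

@[simp] theorem bipG_ll {A B : Type*} (r : A → B → Prop) (a a' : A) :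
    (bipG r).Adj (.inl a) (.inl a') ↔ False := Iff.rfl
@[simp] theorem bipG_lr {A B : Type*} (r : A → B → Prop) (a : A) (b : B) :
    (bipG r).Adj (.inl a) (.inr b) ↔ r a b := Iff.rfl
@[simp] theorem bipG_rl {A B : Type*} (r : A → B → Prop) (a : A) (b : B) :
    (bipG r).Adj (.inr b) (.inl a) ↔ r a b := Iff.rfl
@[simp] theorem bipG_rr {A B : Type*} (r : A → B → Prop) (b b' : B) :
    (bipG r).Adj (.inr b) (.inr b') ↔ False := Iff.rfl

theorem IR_le_of_arrows {V α β : Type*} [Fintype V] (F : SimpleGraph V) (H : SimpleGraph α)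
    (G : SimpleGraph β) (h : ArrowsInd F H G) : IR H G ≤ Fintype.card V := by
  apply Nat.sInf_le
  let e := Fintype.equivFin V
  let i : F ≃g F.map e.toEmbedding := SimpleGraph.Iso.map e F
  refine ⟨F.map e.toEmbedding, fun c => ?_⟩
  rcases h (fun z => c (z.map e)) with ⟨f, hf⟩ | ⟨f, hf⟩
  · exact Or.inl ⟨f.trans i.toEmbedding, fun u v huv => hf u v huv⟩
  · exact Or.inr ⟨f.trans i.toEmbedding, fun u v huv => hf u v huv⟩

open Classical in
theorem IR_le_bip {A B α : Type*} [Fintype A] [Fintype B] (r : A → B → Prop) (H : SimpleGraph α)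
    (n : ℕ)
    (h : ∀ R : A → B → Prop, (∀ a b, R a b → r a b) →
      (∀ a, (Finset.univ.filter (r a)).card < (Finset.univ.filter (R a)).card + n) →
      ∃ f : α → A ⊕ B, Function.Injective f ∧ (∀ u v, (bipG r).Adj (f u) (f v) ↔ H.Adj u v) ∧
        ∀ u v, H.Adj u v → ∀ a b, f u = .inl a → f v = .inr b → R a b) :
    IR H (StarGraph n) ≤ Fintype.card A + Fintype.card B := by
  rw [← Fintype.card_sum]
  apply IR_le_of_arrows (bipG r)
  intro c
  by_cases hb : ∃ a, n ≤ (Finset.univ.filter (fun b => r a b ∧ c s(.inl a, .inr b) = false)).card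
  · right
    obtain ⟨a, ha⟩ := hb
    set S := Finset.univ.filter (fun b => r a b ∧ c s(.inl a, .inr b) = false) with hS
    obtain ⟨g⟩ : Nonempty (Fin n ↪ S) :=
      Function.Embedding.nonempty_of_card_le (by simpa using ha)
    have hg : ∀ i, r a (g i) ∧ c s(.inl a, .inr (g i).1) = false := fun i => by
      have := (g i).2
      simpa only [hS, Finset.mem_filter, Finset.mem_univ, true_and] using this
    refine ⟨⟨⟨Sum.map (fun _ => a) (fun i => (g i).1), ?_⟩, ?_⟩, ?_⟩
    · rintro (x | x) (y | y) hxy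
      · simp [Subsingleton.elim x y]
      · simp at hxy
      · simp at hxy
      · simp only [Sum.map_inr, Sum.inr.injEq] at hxy
        rw [g.injective (Subtype.ext hxy)]
    · rintro (x | x) (y | y)
      · change False ↔ _
        simp [StarGraph]
      · change r a (g y).1 ↔ _
        simp [StarGraph, hg]
      · change r a (g x).1 ↔ _
        simp [StarGraph, hg]
      · change False ↔ _
        simp [StarGraph]
    · rintro (x | x) (y | y) hxy
      · simp [StarGraph] at hxy
      · exact (hg y).2
      · rw [Sym2.eq_swap]
        exact (hg x).2
      · simp [StarGraph] at hxy
  · left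
    push Not at hb
    obtain ⟨f, hinj, hiff, hf⟩ := h (fun a b => r a b ∧ c s(.inl a, .inr b) = true) (fun a b h => h.1) (by
      intro a
      refine lt_of_le_of_lt ?_ (Nat.add_lt_add_left (hb a) _)
      refine le_trans (Finset.card_le_card ?_) (Finset.card_union_le _ _)
      intro b hb
      simp only [Finset.mem_union, Finset.mem_filter, Finset.mem_univ, true_and] at hb ⊢
      cases c s(.inl a, .inr b) <;> simp [hb])
    refine ⟨⟨⟨f, hinj⟩, fun {u v} => hiff u v⟩, fun u v huv => ?_⟩
    change c s(f u, f v) = true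
    have hadj := (hiff u v).2 huv
    rcases hu : f u with a | b <;> rcases hv : f v with a' | b'
    · rw [hu, hv] at hadj; exact hadj.elim
    · exact (hf u v huv a b' hu hv).2
    · rw [Sym2.eq_swap]; exact (hf v u huv.symm a' b hv hu).2
    · rw [hu, hv] at hadj; exact hadj.elim

open Classical in
theorem IR_Ktt (t n a s : ℕ) (ha : 0 < a)
    (h : t * (n + s) + a * (t * a ^ t) ≤ a * s) :
    IR (completeBipartiteGraph (Fin t) (Fin t)) (StarGraph n) ≤ a + (n + s) := by
  have := IR_le_bip (A := Fin a) (B := Fin (n + s)) (fun _ _ => True)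
    (completeBipartiteGraph (Fin t) (Fin t)) n ?_
  · simpa using this
  intro R _ hR
  simp only [Finset.filter_true, Finset.card_univ, Fintype.card_fin] at hR
  let d : Fin (n + s) → Finset (Fin a) := fun b => Finset.univ.filter (fun x => R x b)
  let Hi : Finset (Fin (n + s)) := Finset.univ.filter (fun b => t ≤ (d b).card)
  have h1 : a * s ≤ ∑ b, (d b).card := by
    have : ∑ b, (d b).card = ∑ x : Fin a, (Finset.univ.filter (R x)).card := by
      simp only [d, Finset.card_filter]
      exact Finset.sum_comm
    rw [this]
    calc a * s = ∑ x : Fin a, s := by simp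
      _ ≤ _ := Finset.sum_le_sum fun x _ => by have := hR x; omega
  have h2 : ∑ b, (d b).card ≤ t * (n + s) + a * Hi.card := by
    calc ∑ b, (d b).card ≤ ∑ b, (t + if t ≤ (d b).card then a else 0) := by
          refine Finset.sum_le_sum fun b _ => ?_
          split_ifs with hb
          · have := Finset.card_le_univ (d b)
            simp at this; omega
          · omega
      _ = t * (n + s) + a * Hi.card := by
          rw [Finset.sum_add_distrib, ← Finset.sum_filter]
          simp [Hi, mul_comm]
  have h3 : t * a ^ t ≤ Hi.card := by
    have : a * (t * a ^ t) ≤ a * Hi.card := by omega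
    exact Nat.le_of_mul_le_mul_left this ha
  have hφ : ∀ b : Fin (n + s), ∃ φ : Fin t → Fin a, b ∈ Hi →
      Function.Injective φ ∧ ∀ i, R (φ i) b := by
    intro b
    by_cases hb : b ∈ Hi
    · obtain ⟨g⟩ : Nonempty (Fin t ↪ d b) :=
        Function.Embedding.nonempty_of_card_le (by simpa [Hi] using hb)
      refine ⟨fun i => (g i).1, fun _ => ⟨Subtype.val_injective.comp g.injective, fun i => ?_⟩⟩
      have := (g i).2
      simpa only [d, Finset.mem_filter, Finset.mem_univ, true_and] using this
    · exact ⟨fun _ => ⟨0, ha⟩, fun h => absurd h hb⟩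
  choose φ hφ using hφ
  have : Nonempty (Fin a) := ⟨⟨0, ha⟩⟩
  obtain ⟨ψ, -, hψ⟩ := Finset.exists_le_card_fiber_of_mul_le_card_of_maps_to
    (s := Hi) (t := (Finset.univ : Finset (Fin t → Fin a))) (f := φ) (n := t)
    (fun _ _ => Finset.mem_univ _) Finset.univ_nonempty (by simpa [mul_comm] using h3)
  obtain ⟨g⟩ : Nonempty (Fin t ↪ (Hi.filter (fun b => φ b = ψ) : Finset _)) :=
    Function.Embedding.nonempty_of_card_le (by rw [Fintype.card_coe, Fintype.card_fin]; exact hψ)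
  have hg : ∀ j, (g j).1 ∈ Hi ∧ φ (g j).1 = ψ := fun j => by
    have := (g j).2
    simpa only [Finset.mem_filter] using this
  refine ⟨Sum.map ψ (fun i => (g i).1), ?_, ?_, ?_⟩
  · rintro (x | x) (y | y) hxy
    · have := (hφ _ (hg x).1).1
      rw [(hg x).2] at this
      simpa using this (by simpa using hxy)
    · simp at hxy
    · simp at hxy
    · simp only [Sum.map_inr, Sum.inr.injEq] at hxy
      rw [g.injective (Subtype.ext hxy)]
  · rintro (x | x) (y | y) <;> simp
  · rintro (x | x) (y | y) hxy a' b' hu hv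
    · simp at hxy
    · have := (hφ _ (hg y).1).2 x
      rw [(hg y).2] at this
      simp only [Sum.map_inl, Sum.map_inr,
        Sum.inl.injEq, Sum.inr.injEq] at hu hv
      rwa [← hu, ← hv]
    · simp at hu
    · simp at hxy

/-- number of vertices of the blow-up missed by all of `S` -/
theorem miss_card (k q L : ℕ) (S : Finset (Fin k)) :
    (Finset.univ.filter (fun b : (Fin k → Fin (q + 1)) × Fin L => ∀ a ∈ S, b.1 a ≠ 0)).card
      = q ^ S.card * (q + 1) ^ (k - S.card) * L := by
  have : (Finset.univ.filter (fun b : (Fin k → Fin (q + 1)) × Fin L => ∀ a ∈ S, b.1 a ≠ 0))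
    = (Fintype.piFinset (fun a => if a ∈ S then (Finset.univ.erase (0 : Fin (q+1)))
        else Finset.univ)) ×ˢ (Finset.univ : Finset (Fin L)) := by
    ext b
    simp only [Finset.mem_filter, Finset.mem_univ, true_and, Finset.mem_product,
      Fintype.mem_piFinset, and_true]
    refine forall_congr' fun a => ?_
    by_cases h : a ∈ S <;> simp [h]
  rw [this, Finset.card_product, Fintype.card_piFinset]
  have h2 : ∀ a : Fin k, (if a ∈ S then (Finset.univ.erase (0 : Fin (q+1)))
        else Finset.univ).card = if a ∈ S then q else q + 1 := by
    intro a; by_cases h : a ∈ S <;> simp [h]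
  simp only [h2]
  rw [Finset.prod_ite]
  simp [Finset.filter_not, Finset.card_sdiff]

/-- numeric estimate -/
theorem miss_small (k q s : ℕ) (hq : 1 ≤ q) (hs : (q + 1) ^ 2 ≤ s) (hk : s ≤ k) :
    q ^ s * (q + 1) ^ (k - s) < (q + 1) ^ (k - 1) := by
  have hs1 : 1 ≤ s := le_trans (Nat.one_le_pow _ _ (by omega)) hs
  have key : q ^ s < (q + 1) ^ (s - 1) := by
    have hb : (q : ℝ) ^ s * (q + 1) < (q + 1 : ℝ) ^ s := by
      have hq0 : (0 : ℝ) < q := by exact_mod_cast hq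
      have h1 := one_add_mul_le_pow (a := (1 / q : ℝ)) (by
        have : (0:ℝ) < 1 / q := by positivity
        linarith) s
      have h2 : (q + 1 : ℝ) < 1 + s * (1 / q) := by
        have : ((q:ℝ) + 1) ^ 2 ≤ s := by exact_mod_cast hs
        rw [mul_one_div, add_comm (q : ℝ) 1]
        apply add_lt_add_right
        rw [lt_div_iff₀ hq0]
        nlinarith
      have h3 : (q + 1 : ℝ) ^ s = q ^ s * (1 + 1 / q) ^ s := by
        rw [← mul_pow]; congr 1; field_simp
      rw [h3]
      exact mul_lt_mul_of_pos_left (lt_of_lt_of_le h2 h1) (by positivity)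
    have hb' : q ^ s * (q + 1) < (q + 1) ^ s := by exact_mod_cast hb
    have h4 : (q + 1) ^ s = (q + 1) ^ (s - 1) * (q + 1) := by
      rw [← pow_succ]; congr 1; omega
    rw [h4] at hb'
    exact Nat.lt_of_mul_lt_mul_right hb'
  calc q ^ s * (q + 1) ^ (k - s) < (q + 1) ^ (s - 1) * (q + 1) ^ (k - s) :=
        Nat.mul_lt_mul_of_pos_right key (by positivity)
    _ = (q + 1) ^ (k - 1) := by rw [← pow_add]; congr 1; omega

/-- The relation of the blow-up. -/
def blowRel (k q L : ℕ) : Fin k → (Fin k → Fin (q + 1)) × Fin L → Prop := fun a b => b.1 a ≠ 0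

open Classical in
theorem red_large (k q L n : ℕ) (hn : n + (q + 1) ^ (k - 1) * L ≤ q * (q + 1) ^ (k - 1) * L)
    (R : Fin k → (Fin k → Fin (q + 1)) × Fin L → Prop)
    (hR : ∀ a, (Finset.univ.filter (blowRel k q L a)).card
      < (Finset.univ.filter (R a)).card + n) (a : Fin k) :
    (q + 1) ^ (k - 1) * L < (Finset.univ.filter (R a)).card := by
  have h1 := miss_card k q L {a}
  have h2 := hR a
  have h3 : (Finset.univ.filter (blowRel k q L a)).card = q * (q + 1) ^ (k - 1) * L := by
    rw [Finset.card_singleton, pow_one] at h1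
    rw [← h1]
    congr 1
    ext b
    simp [blowRel]
  omega

open Classical in
theorem exists_hit (k q L : ℕ) (hq : 1 ≤ q) 
    (R : Fin k → (Fin k → Fin (q + 1)) × Fin L → Prop) (a : Fin k)
    (hR : (q + 1) ^ (k - 1) * L < (Finset.univ.filter (R a)).card)
    (S : Finset (Fin k)) (hS : (q + 1) ^ 2 ≤ S.card) :
    ∃ a' ∈ S, ∃ b, R a b ∧ ¬ blowRel k q L a' b := by
  by_contra hcon
  push Not at hcon
  have h1 := miss_card k q L S
  have hSk : S.card ≤ k := by simpa using Finset.card_le_univ S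
  have h2 := miss_small k q S.card hq hS hSk
  have h3 : (Finset.univ.filter (R a)).card ≤ 
    (Finset.univ.filter (fun b : (Fin k → Fin (q + 1)) × Fin L => ∀ a ∈ S, b.1 a ≠ 0)).card := by
    apply Finset.card_le_card
    intro b hb
    simp only [Finset.mem_filter, Finset.mem_univ, true_and] at hb ⊢
    exact fun a' ha' => hcon a' ha' b hb
  rw [h1] at h3
  have := Nat.mul_le_mul_right L h2.le
  omega

theorem emb_P4 {A B : Type*} (r R : A → B → Prop) (a a' : A) (b b' : B)
    (h1 : R a b) (h2 : R a' b) (h3 : R a' b') (k1 : r a b) (k2 : r a' b) (k3 : r a' b')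
    (k4 : ¬ r a b') (na : a ≠ a') (nb : b ≠ b') :
    ∃ f : Fin 4 → A ⊕ B, Function.Injective f ∧
      (∀ u v, (bipG r).Adj (f u) (f v) ↔ (SimpleGraph.pathGraph 4).Adj u v) ∧
        ∀ u v, (SimpleGraph.pathGraph 4).Adj u v → ∀ a b, f u = .inl a → f v = .inr b → R a b := by
  refine ⟨![.inl a, .inr b, .inl a', .inr b'], ?_, ?_, ?_⟩
  · intro u v huv
    fin_cases u <;> fin_cases v <;> simp [na, nb, na.symm, nb.symm] at huv ⊢
  · intro u v
    fin_cases u <;> fin_cases v <;> simp [SimpleGraph.pathGraph_adj, *]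
  · intro u v huv x y hu hv
    rw [SimpleGraph.pathGraph_adj] at huv
    fin_cases u <;> fin_cases v <;> simp at huv hu hv <;> subst hu hv <;> assumption

theorem emb_2K2 {A B : Type*} (r R : A → B → Prop) (a a' : A) (b b' : B)
    (h1 : R a b) (h2 : R a' b') (k1 : r a b) (k2 : r a' b') (k3 : ¬ r a' b)
    (k4 : ¬ r a b') (na : a ≠ a') (nb : b ≠ b') :
    ∃ f : Fin 4 → A ⊕ B, Function.Injective f ∧
      (∀ u v, (bipG r).Adj (f u) (f v) ↔ TwoK2.Adj u v) ∧
        ∀ u v, TwoK2.Adj u v → ∀ a b, f u = .inl a → f v = .inr b → R a b := by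
  refine ⟨![.inl a, .inr b, .inl a', .inr b'], ?_, ?_, ?_⟩
  · intro u v huv
    fin_cases u <;> fin_cases v <;> simp [na, nb, na.symm, nb.symm] at huv ⊢
  · intro u v
    fin_cases u <;> fin_cases v <;> simp [TwoK2, *]
  · intro u v huv x y hu hv
    simp only [TwoK2, SimpleGraph.fromEdgeSet_adj] at huv
    fin_cases u <;> fin_cases v <;> simp at huv hu hv <;> subst hu hv <;> assumption

open Classical in
theorem IR_P4 (k q L n : ℕ) (hq : 1 ≤ q) (hk : k = (q + 1) ^ 3)
    (hn : n + (q + 1) ^ (k - 1) * L ≤ q * (q + 1) ^ (k - 1) * L) :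
    IR (SimpleGraph.pathGraph 4) (StarGraph n) ≤ k + (q + 1) ^ k * L := by
  have := IR_le_bip (blowRel k q L) (SimpleGraph.pathGraph 4) n ?_
  · simpa using this
  intro R hRr hR
  have hk1 : 1 ≤ k := by rw [hk]; exact Nat.one_le_pow _ _ (by omega)
  have hlarge := red_large k q L n hn R hR
  obtain ⟨b, hb⟩ : ∃ b, (q + 1) ^ 2 ≤ (Finset.univ.filter (fun a => R a b)).card := by
    by_contra hcon
    push Not at hcon
    have e : ∑ b, (Finset.univ.filter (fun a => R a b)).card
        = ∑ x, (Finset.univ.filter (R x)).card := by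
      simp only [Finset.card_filter]
      exact Finset.sum_comm
    have l1 : ∑ b, (Finset.univ.filter (fun a => R a b)).card
        ≤ ((q + 1) ^ k * L) * (q + 1) ^ 2 := by
      refine le_trans (Finset.sum_le_sum fun b _ => (hcon b).le) ?_
      simp
    have l2 : k * ((q + 1) ^ (k - 1) * L) < ∑ x, (Finset.univ.filter (R x)).card := by
      calc k * ((q + 1) ^ (k - 1) * L) = ∑ x : Fin k, ((q + 1) ^ (k - 1) * L) := by simp
        _ < _ := Finset.sum_lt_sum_of_nonempty ⟨⟨0, hk1⟩, Finset.mem_univ _⟩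
            fun x _ => hlarge x
    have l3 : k * ((q + 1) ^ (k - 1) * L) = ((q + 1) ^ k * L) * (q + 1) ^ 2 := by
      obtain ⟨m, rfl⟩ : ∃ m, k = m + 1 := ⟨k - 1, by omega⟩
      rw [Nat.add_sub_cancel, hk, ← hk, pow_succ (q+1) m, hk]
      ring
    omega
  have hne : (Finset.univ.filter (fun a => R a b)).Nonempty := by
    rw [← Finset.card_pos]
    exact lt_of_lt_of_le (by positivity) hb
  obtain ⟨a, ha⟩ := hne
  obtain ⟨a', ha', b', hb', hnb'⟩ := exists_hit k q L hq R a (hlarge a) _ hb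
  simp only [Finset.mem_filter, Finset.mem_univ, true_and] at ha ha'
  have hab := hRr _ _ ha
  have hab' := hRr _ _ ha'
  have hab'' := hRr _ _ hb'
  have n1 : a' ≠ a := by rintro rfl; exact hnb' hab''
  have n2 : b' ≠ b := by rintro rfl; exact hnb' hab'
  exact emb_P4 _ R a' a b b' ha' ha hb' hab' hab hab'' hnb' n1 n2.symm

open Classical in
theorem IR_2K2 (k q L n : ℕ) (hq : 1 ≤ q) (hk : k = (q + 1) ^ 3)
    (hn : n + (q + 1) ^ (k - 1) * L ≤ q * (q + 1) ^ (k - 1) * L) :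
    IR TwoK2 (StarGraph n) ≤ k + (q + 1) ^ k * L := by
  have := IR_le_bip (blowRel k q L) TwoK2 n ?_
  · simpa using this
  intro R hRr hR
  have hk1 : 1 ≤ k := by rw [hk]; exact Nat.one_le_pow _ _ (by omega)
  have hlarge := red_large k q L n hn R hR
  let P : Fin k → Fin k → Prop := fun a a' => ∃ b, R a b ∧ ¬ blowRel k q L a' b
  obtain ⟨a, a', ⟨b, hb, hnb⟩, ⟨b', hb', hnb'⟩⟩ : ∃ a a', P a a' ∧ P a' a := by
    by_contra hcon
    push Not at hcon
    have l1 : ∀ a, (Finset.univ.filter (fun a' => ¬ P a a')).card < (q + 1) ^ 2 := by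
      intro a
      by_contra hc
      push Not at hc
      obtain ⟨a', ha', h⟩ := exists_hit k q L hq R a (hlarge a) _ hc
      simp only [Finset.mem_filter, Finset.mem_univ, true_and] at ha'
      exact ha' h
    have l2 : ∑ a, (Finset.univ.filter (fun a' => ¬ P a a')).card < k * (q + 1) ^ 2 := by
      calc _ < ∑ a : Fin k, (q + 1) ^ 2 :=
            Finset.sum_lt_sum_of_nonempty ⟨⟨0, hk1⟩, Finset.mem_univ _⟩ fun x _ => l1 x
        _ = _ := by simp
    have l3 : k * k ≤ ∑ a, (Finset.univ.filter (fun a' => ¬ P a a')).card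
        + ∑ a, (Finset.univ.filter (fun a' => ¬ P a a')).card := by
      simp only [Finset.card_filter]
      nth_rewrite 2 [Finset.sum_comm]
      rw [← Finset.sum_add_distrib]
      calc k * k = ∑ a : Fin k, ∑ a' : Fin k, 1 := by simp
        _ ≤ _ := by
          refine Finset.sum_le_sum fun a _ => ?_
          rw [← Finset.sum_add_distrib]
          refine Finset.sum_le_sum fun a' _ => ?_
          have := hcon a a'
          by_cases h : P a a'
          · simp [this h]
          · simp [h]
    have l4 : k * (2 * (q + 1) ^ 2) ≤ k * k := by
      apply Nat.mul_le_mul_left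
      rw [hk, pow_succ (q + 1) 2, mul_comm]
      exact Nat.mul_le_mul_left _ (by omega)
    have l5 : k * (2 * (q + 1) ^ 2) = k * (q + 1) ^ 2 + k * (q + 1) ^ 2 := by ring
    omega
  have hab := hRr _ _ hb
  have hab' := hRr _ _ hb'
  have n1 : a ≠ a' := by rintro rfl; exact hnb hab
  have n2 : b ≠ b' := by rintro rfl; exact hnb hab'
  exact emb_2K2 _ R a a' b b' hb hb' hab hab' hnb hnb' n1 n2

theorem num_log (q k n : ℕ) (hq : 2 ≤ q) (hn : (q + 1) ^ k * (q + 1) ≤ n) :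
    ∃ L : ℕ, n + (q + 1) ^ (k - 1) * L ≤ q * (q + 1) ^ (k - 1) * L ∧
      (((k + (q + 1) ^ k * L : ℕ)) : ℝ) ≤ n + 8 * n / (q + 1 : ℝ) := by
  rcases Nat.eq_zero_or_pos k with rfl | hk
  · obtain ⟨p, rfl⟩ : ∃ p, q = p + 2 := ⟨q - 2, by omega⟩
    refine ⟨n / (p + 1) + 1, ?_, ?_⟩
    · have := Nat.lt_div_mul_add (a := n) (b := p + 1) (by omega)
      simp only [Nat.zero_sub, pow_zero, one_mul, mul_one]
      nlinarith
    · have h1 : ((n / (p + 1) : ℕ) : ℝ) ≤ n / (p + 1 : ℝ) := by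
        exact_mod_cast Nat.cast_div_le (m := n) (n := p + 1) (α := ℝ)
      have h2 : ((p : ℝ) + 2 + 1) ≤ n := by simpa using (by exact_mod_cast hn : (((p + 2 + 1) ^ 0 * (p + 2 + 1) : ℕ) : ℝ) ≤ n)
      have h3 : (n : ℝ) / (p + 1) ≤ n := div_le_self (by positivity) (by
        have : (0:ℝ) ≤ p := by positivity
        linarith)
      have h4 : (1 : ℝ) ≤ n / (p + 2 + 1) := by
        rw [le_div_iff₀ (by positivity)]; linarith
      push_cast
      rw [mul_div_assoc]
      simp only [pow_zero]
      linarith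
  obtain ⟨p, rfl⟩ : ∃ p, q = p + 2 := ⟨q - 2, by omega⟩
  obtain ⟨m, rfl⟩ : ∃ m, k = m + 1 := ⟨k - 1, by omega⟩
  set D := (p + 1) * (p + 2 + 1) ^ m with hD
  have hD0 : 0 < D := by positivity
  refine ⟨n / D + 1, ?_, ?_⟩
  · have := Nat.lt_div_mul_add (a := n) (b := D) hD0
    rw [Nat.add_sub_cancel]
    have e : (p + 2) * (p + 2 + 1) ^ m * (n / D + 1) =
      (n / D * D + D) + (p + 2 + 1) ^ m * (n / D + 1) := by
      rw [hD]; ring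
    omega
  · have h1 : ((n / D : ℕ) : ℝ) ≤ n / D := Nat.cast_div_le
    have hk : ((m + 1 : ℕ) : ℝ) ≤ ((p : ℝ) + 2 + 1) ^ (m + 1) := by
      exact_mod_cast (Nat.lt_pow_self (n := m + 1) (a := p + 2 + 1) (by omega)).le
    have hn' : ((p : ℝ) + 2 + 1) ^ (m + 1) * (p + 2 + 1) ≤ n := by exact_mod_cast hn
    have h2 : ((p : ℝ) + 2 + 1) ^ (m + 1) ≤ n / (p + 2 + 1) := by
      rwa [le_div_iff₀ (by positivity)]
    have h3 : ((p : ℝ) + 2 + 1) ^ (m + 1) * (n / D) ≤ n + 6 * (n / (p + 2 + 1)) := by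
      have : ((p : ℝ) + 2 + 1) ^ (m + 1) * (n / D) = n * ((p + 3) / (p + 1)) := by
        rw [hD]; push_cast; rw [pow_succ]; field_simp; ring
      rw [this]
      have h5 : ((p : ℝ) + 3) / (p + 1) ≤ 1 + 6 / (p + 2 + 1) := by
        have hp : (0:ℝ) ≤ p := by positivity
        rw [div_le_iff₀ (by positivity)]
        have : (1 + 6 / ((p:ℝ) + 2 + 1)) * (p + 1) = ((p + 9) * (p + 1)) / (p + 3) := by
          field_simp; ring
        rw [this, le_div_iff₀ (by positivity)]
        nlinarith
      calc (n : ℝ) * ((p + 3) / (p + 1)) ≤ n * (1 + 6 / (p + 2 + 1)) := by gcongr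
        _ = _ := by ring
    have h4 : ((p : ℝ) + 2 + 1) ^ (m + 1) * ((n / D : ℕ) : ℝ) ≤
      ((p : ℝ) + 2 + 1) ^ (m + 1) * (n / D) := by gcongr
    rw [Nat.cast_add, Nat.cast_mul, Nat.cast_add (n / D)]
    push_cast at hk h4 ⊢
    rw [mul_div_assoc]
    linarith

theorem log_part (n : ℕ) (hn : (1296 : ℝ) ≤ Real.logb 2 n) :
    (IR TwoK2 (StarGraph n) : ℝ) ≤ n + 32 * n * (Real.logb 2 n) ^ (-(1 / 4 : ℝ)) ∧
      (IR (SimpleGraph.pathGraph 4) (StarGraph n) : ℝ)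
        ≤ n + 32 * n * (Real.logb 2 n) ^ (-(1 / 4 : ℝ)) := by
  set l := Real.logb 2 n with hl
  have hl0 : 0 ≤ l := by linarith
  set x : ℝ := l ^ (1 / 4 : ℝ) with hx
  have hx4 : x ^ 4 = l := by
    rw [hx, ← Real.rpow_natCast, ← Real.rpow_mul hl0]; norm_num
  have hx0 : 0 ≤ x := by positivity
  have hx6 : 6 ≤ x := by
    by_contra hc
    push Not at hc
    have : x ^ 4 < 6 ^ 4 := pow_lt_pow_left₀ hc hx0 (by norm_num)
    norm_num at this
    linarith
  have hn0 : (0 : ℝ) < n := by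
    rcases Nat.eq_zero_or_pos n with h | h
    · rw [h] at hl; simp at hl; linarith
    · exact_mod_cast h
  have hQ3 : 3 ≤ ⌊x / 2⌋₊ := Nat.le_floor (by push_cast; linarith)
  have hQle : (⌊x / 2⌋₊ : ℝ) ≤ x / 2 := Nat.floor_le (by positivity)
  have hQge : x / 4 ≤ (⌊x / 2⌋₊ : ℝ) := by
    have := Nat.lt_floor_add_one (x / 2)
    linarith
  obtain ⟨q, hq⟩ : ∃ q, ⌊x / 2⌋₊ = q + 1 := ⟨⌊x / 2⌋₊ - 1, by omega⟩
  rw [hq] at hQ3 hQle hQge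
  have hbig : (q + 1) ^ ((q + 1) ^ 3) * (q + 1) ≤ n := by
    have e1 : (q + 1) ^ ((q + 1) ^ 3) * (q + 1) ≤ 2 ^ (2 * (q + 1) ^ 4) := by
      rw [← pow_succ]
      calc (q + 1) ^ ((q + 1) ^ 3 + 1) ≤ (2 ^ (q + 1)) ^ ((q + 1) ^ 3 + 1) :=
            Nat.pow_le_pow_left Nat.lt_two_pow_self.le _
        _ = 2 ^ ((q + 1) * ((q + 1) ^ 3 + 1)) := by rw [← pow_mul]
        _ ≤ _ := by
          apply Nat.pow_le_pow_right (by norm_num)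
          have : (q + 1) ^ 1 ≤ (q + 1) ^ 4 := Nat.pow_le_pow_right (by omega) (by omega)
          nlinarith
    have e2 : ((2 ^ (2 * (q + 1) ^ 4) : ℕ) : ℝ) ≤ n := by
      have h1 : ((2 * (q + 1) ^ 4 : ℕ) : ℝ) ≤ l := by
        have : ((q + 1 : ℕ) : ℝ) ^ 4 ≤ (x / 2) ^ 4 := by gcongr
        rw [div_pow, hx4] at this
        push_cast at this ⊢
        linarith
      have h2 : (2 : ℝ) ^ l = n := Real.rpow_logb (by norm_num) (by norm_num) hn0
      rw [← h2, Nat.cast_pow, ← Real.rpow_natCast, Nat.cast_ofNat]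
      exact Real.rpow_le_rpow_of_exponent_le (by norm_num) h1
    exact e1.trans (by exact_mod_cast e2)
  obtain ⟨L, hL1, hL2⟩ := num_log q ((q + 1) ^ 3) n (by omega) hbig
  have hfin : (8 : ℝ) * n / (q + 1 : ℝ) ≤ 32 * n * l ^ (-(1 / 4 : ℝ)) := by
    rw [Real.rpow_neg hl0, ← hx, ← div_eq_mul_inv, div_le_div_iff₀ (by positivity) (by linarith)]
    push_cast at hQge
    nlinarith
  have h1 := IR_2K2 ((q + 1) ^ 3) q L n (by omega) rfl hL1
  have h2 := IR_P4 ((q + 1) ^ 3) q L n (by omega) rfl hL1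
  have h1' := (Nat.cast_le (α := ℝ)).2 h1
  have h2' := (Nat.cast_le (α := ℝ)).2 h2
  constructor <;> linarith

theorem Ktt_part (t n : ℕ) (ht : 2 ≤ t) (hn0 : 0 < n)
    (hn : (2 * t + t * 2 ^ (t + 1) + 1 : ℝ) ≤ (n : ℝ) ^ (1 / (2 * (t : ℝ)))) :
    (IR (completeBipartiteGraph (Fin t) (Fin t)) (StarGraph n) : ℝ)
        ≤ n + (2 * t + t * 2 ^ (t + 1) + 3) * (n : ℝ) ^ ((1 : ℝ) - 1 / (2 * (t : ℝ))) := by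
  set x : ℝ := (n : ℝ) ^ (1 / (2 * (t : ℝ))) with hx
  set C : ℝ := 2 * t + t * 2 ^ (t + 1) with hC
  have hn0' : (0 : ℝ) < n := by exact_mod_cast hn0
  have ht0 : (0 : ℝ) < t := by exact_mod_cast (by omega : 0 < t)
  have hC0 : 0 ≤ C := by positivity
  have hx1 : 1 ≤ x := by linarith
  have hx0 : 0 < x := by linarith
  have hxn : x ^ (2 * t) = n := by
    rw [hx, ← Real.rpow_natCast, ← Real.rpow_mul hn0'.le]
    push_cast
    rw [one_div_mul_cancel (by positivity), Real.rpow_one]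
  have hpow : (n : ℝ) ^ ((1 : ℝ) - 1 / (2 * (t : ℝ))) = n / x := by
    rw [Real.rpow_sub hn0', Real.rpow_one]
  rw [hpow]
  have hxx : x * x ≤ n := by
    rw [← hxn, ← pow_two]; exact pow_le_pow_right₀ hx1 (by omega)
  have hxle : x ≤ n / x := by rw [le_div_iff₀ hx0]; exact hxx
  have a1 : x ≤ (⌈x⌉₊ : ℝ) := Nat.le_ceil x
  have a2 : (⌈x⌉₊ : ℝ) ≤ 2 * x := by
    have := Nat.ceil_lt_add_one hx0.le
    linarith
  have s1 : C * (n / x) ≤ (⌈C * (n / x)⌉₊ : ℝ) := Nat.le_ceil _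
  have s2 : (⌈C * (n / x)⌉₊ : ℝ) ≤ (C + 1) * (n / x) := by
    have := Nat.ceil_lt_add_one (a := C * (n / x)) (by positivity)
    linarith
  generalize ⌈x⌉₊ = a at *
  generalize ⌈C * (n / x)⌉₊ = s at *
  have key : t * (n + s) + a * (t * a ^ t) ≤ a * s := by
    have k1 : (C : ℝ) * n ≤ a * s := by
      calc C * n = x * (C * (n / x)) := by field_simp
        _ ≤ a * s := by gcongr
    have k2 : (s : ℝ) ≤ n := by
      refine s2.trans ?_
      calc (C + 1) * (n / x) ≤ x * (n / x) := by gcongr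
        _ = n := by field_simp
    have k3 : (a : ℝ) * (t * a ^ t) ≤ t * 2 ^ (t + 1) * n := by
      calc (a : ℝ) * (t * a ^ t) = t * a ^ (t + 1) := by ring
        _ ≤ t * (2 * x) ^ (t + 1) := by gcongr
        _ = t * 2 ^ (t + 1) * x ^ (t + 1) := by rw [mul_pow]; ring
        _ ≤ t * 2 ^ (t + 1) * x ^ (2 * t) := by
          have := pow_le_pow_right₀ hx1 (show t + 1 ≤ 2 * t by omega)
          gcongr
        _ = _ := by rw [hxn]
    have k4 : (t : ℝ) * s ≤ t * n := by gcongr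
    have : (t : ℝ) * (n + s) + a * (t * a ^ t) ≤ a * s := by
      rw [hC] at k1
      linarith
    exact_mod_cast this
  have ha : 0 < a := by
    have : (0 : ℝ) < a := by linarith
    exact_mod_cast this
  have h := (Nat.cast_le (α := ℝ)).2 (IR_Ktt t n a s ha key)
  push_cast at h
  refine h.trans ?_
  have : (C + 3) * (n / x) = (C + 1) * (n / x) + 2 * (n / x) := by ring
  linarith

/-- for every t ≥ 2 there are c > 0 and n₀ such that for n > n₀,
IR(2K₂, K_{1,n}) ≤ n + cn·(log₂ n)^{−1/4}, IR(P₄, K_{1,n}) ≤ n + cn·(log₂ n)^{−1/4},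
and IR(K_{t,t}, K_{1,n}) ≤ n + c·n^{1 − 1/(2t)}. -/
theorem IR_upper_small_graphs (t : ℕ) (ht : 2 ≤ t) :
    ∃ c : ℝ, 0 < c ∧ ∃ n₀ : ℕ, ∀ n : ℕ, n₀ < n →
      (IR TwoK2 (StarGraph n) : ℝ) ≤ n + c * n * (Real.logb 2 n) ^ (-(1 / 4 : ℝ)) ∧
      (IR (SimpleGraph.pathGraph 4) (StarGraph n) : ℝ)
        ≤ n + c * n * (Real.logb 2 n) ^ (-(1 / 4 : ℝ)) ∧
      (IR (completeBipartiteGraph (Fin t) (Fin t)) (StarGraph n) : ℝ)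
        ≤ n + c * (n : ℝ) ^ ((1 : ℝ) - 1 / (2 * (t : ℝ))) := by
  have e1 : ∀ᶠ n : ℕ in Filter.atTop, (1296 : ℝ) ≤ Real.logb 2 n :=
    ((Real.tendsto_logb_atTop (by norm_num)).comp tendsto_natCast_atTop_atTop).eventually_ge_atTop _
  have e2 : ∀ᶠ n : ℕ in Filter.atTop,
      (2 * t + t * 2 ^ (t + 1) + 1 : ℝ) ≤ (n : ℝ) ^ (1 / (2 * (t : ℝ))) :=
    ((tendsto_rpow_atTop (by
      have : (0 : ℝ) < t := by exact_mod_cast (by omega : 0 < t)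
      positivity)).comp tendsto_natCast_atTop_atTop).eventually_ge_atTop _
  obtain ⟨n₀, h₀⟩ := Filter.eventually_atTop.1 (e1.and e2)
  refine ⟨32 + (2 * t + t * 2 ^ (t + 1) + 3), by positivity, n₀, fun n hn => ?_⟩
  obtain ⟨h1, h2⟩ := h₀ n hn.le
  obtain ⟨p1, p2⟩ := log_part n h1
  have p3 := Ktt_part t n ht (by omega) h2
  have hl : (0 : ℝ) ≤ (Real.logb 2 n) ^ (-(1 / 4 : ℝ)) := Real.rpow_nonneg (by linarith) _
  have m1 : 32 * (n : ℝ) * (Real.logb 2 n) ^ (-(1 / 4 : ℝ)) ≤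
      (32 + (2 * t + t * 2 ^ (t + 1) + 3)) * n * (Real.logb 2 n) ^ (-(1 / 4 : ℝ)) := by
    have : (32 : ℝ) ≤ 32 + (2 * t + t * 2 ^ (t + 1) + 3) := by
      have : (0 : ℝ) ≤ 2 * t + t * 2 ^ (t + 1) + 3 := by positivity
      linarith
    gcongr
  have m2 : (2 * t + t * 2 ^ (t + 1) + 3) * (n : ℝ) ^ ((1 : ℝ) - 1 / (2 * (t : ℝ))) ≤
      (32 + (2 * t + t * 2 ^ (t + 1) + 3)) * (n : ℝ) ^ ((1 : ℝ) - 1 / (2 * (t : ℝ))) := by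
    exact mul_le_mul_of_nonneg_right (by linarith) (by positivity)
  exact ⟨by linarith, by linarith, by linarith⟩
end
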